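/- arXiv:1405.5318 — 8 statements merged into one kernel-verified Lean document; each statement's English description precedes it below -/
import Mathlib

section
/- Let α0,…,α4 be complex parameters with α0+α1+2α2+α3+α4 = 1 and let q, p be holomorphic functions on an open set U ⊆ ℂ∖{0,1} solving the Hamiltonian system for the Painlevé VI Hamiltonian H. If moreover q(t) ∉ {0,1,t} for all t ∈ U, then q satisfies the Painlevé VI equation q'' = (1/2)(1/q + 1/(q−1) + 1/(q−t))(q')² − (1/t + 1/(t−1) + 1/(q−t))q' + [q(q−1)(q−t)/(t²(t−1)²)]·(α + β t/q² + γ(t−1)/(q−1)² + δ t(t−1)/(q−t)²) with α = α1²/2, β = −α4²/2, γ = α3²/2, δ = (1−α0²)/2. -/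
/-- The Painlevé VI Hamiltonian. -/
noncomputable def PVIHamiltonian (α0 α1 α2 α3 α4 q p t : ℂ) : ℂ :=
  q * (q - 1) * (q - t) * p ^ 2
    - ((α0 - 1) * q * (q - 1) + α3 * q * (q - t) + α4 * (q - 1) * (q - t)) * p
    + α2 * (α1 + α2) * (q - t)

/-- The pair `(q, p)` solves the Hamiltonian system
`t(t-1) q' = ∂H/∂p`, `t(t-1) p' = -∂H/∂q` on `U`. -/
def SolvesHamSystem (α0 α1 α2 α3 α4 : ℂ) (U : Set ℂ) (q p : ℂ → ℂ) : Prop :=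
  ∀ t ∈ U,
    t * (t - 1) * deriv q t
        = deriv (fun p' => PVIHamiltonian α0 α1 α2 α3 α4 (q t) p' t) (p t) ∧
    t * (t - 1) * deriv p t
        = - deriv (fun q' => PVIHamiltonian α0 α1 α2 α3 α4 q' (p t) t) (q t)

theorem pvi_alg (a0 a1 a2 a3 a4 q p t d e f : ℂ) (h : a0 + a1 + 2 * a2 + a3 + a4 = 1)
    (ht : t ≠ 0) (ht1 : t - 1 ≠ 0) (hq : q ≠ 0) (hq1 : q - 1 ≠ 0) (hqt : q - t ≠ 0)
    (hd : t * (t - 1) * d = 2 * (q * (q - 1) * (q - t)) * p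
      - ((a0 - 1) * q * (q - 1) + a3 * q * (q - t) + a4 * (q - 1) * (q - t)))
    (he : t * (t - 1) * e = -(((q - 1) * (q - t) + q * (q - t) + q * (q - 1)) * p ^ 2
      - ((a0 - 1) * (2 * q - 1) + a3 * (2 * q - t) + a4 * (2 * q - 1 - t)) * p + a2 * (a1 + a2)))
    (hf : (2 * t - 1) * d + t * (t - 1) * f =
      2 * (((q - 1) * (q - t) + q * (q - t) + q * (q - 1)) * d - q * (q - 1)) * p
      + 2 * (q * (q - 1) * (q - t)) * e
      - (((a0 - 1) * (2 * q - 1) + a3 * (2 * q - t) + a4 * (2 * q - 1 - t)) * d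
        - a3 * q - a4 * (q - 1))) :
    f = (1 / 2) * (1 / q + 1 / (q - 1) + 1 / (q - t)) * d ^ 2
          - (1 / t + 1 / (t - 1) + 1 / (q - t)) * d
          + q * (q - 1) * (q - t) / (t ^ 2 * (t - 1) ^ 2)
            * (a1 ^ 2 / 2 + (-(a4 ^ 2) / 2) * t / q ^ 2
               + (a3 ^ 2 / 2) * (t - 1) / (q - 1) ^ 2
               + ((1 - a0 ^ 2) / 2) * (t * (t - 1)) / (q - t) ^ 2) := by
  have hT : t * (t - 1) ≠ 0 := mul_ne_zero ht ht1
  -- eliminate p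
  have hA : 2 * (q * (q - 1) * (q - t)) ≠ 0 := by simp [hq, hq1, hqt]
  have h0 : a0 = 1 - a1 - 2 * a2 - a3 - a4 := by linear_combination h
  subst h0
  have hd' : d = (2 * (q * (q - 1) * (q - t)) * p
      - ((1 - a1 - 2 * a2 - a3 - a4 - 1) * q * (q - 1) + a3 * q * (q - t) + a4 * (q - 1) * (q - t)))
      / (t * (t - 1)) := by rw [eq_div_iff hT]; linear_combination hd
  have he' : e = (-(((q - 1) * (q - t) + q * (q - t) + q * (q - 1)) * p ^ 2
      - ((1 - a1 - 2 * a2 - a3 - a4 - 1) * (2 * q - 1) + a3 * (2 * q - t) + a4 * (2 * q - 1 - t)) * p + a2 * (a1 + a2)))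
      / (t * (t - 1)) := by rw [eq_div_iff hT]; linear_combination he
  have hf' : f = (2 * (((q - 1) * (q - t) + q * (q - t) + q * (q - 1)) * d - q * (q - 1)) * p
      + 2 * (q * (q - 1) * (q - t)) * e
      - (((1 - a1 - 2 * a2 - a3 - a4 - 1) * (2 * q - 1) + a3 * (2 * q - t) + a4 * (2 * q - 1 - t)) * d
        - a3 * q - a4 * (q - 1)) - (2 * t - 1) * d) / (t * (t - 1)) := by
    rw [eq_div_iff hT]; linear_combination hf
  rw [hf', he', hd']
  clear hf' he' hd' hf he hd h
  field_simp
  ring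

theorem pvi_dp (a0 a1 a2 a3 a4 q p t : ℂ) :
    deriv (fun p' => PVIHamiltonian a0 a1 a2 a3 a4 q p' t) p = 2 * (q * (q - 1) * (q - t)) * p
      - ((a0 - 1) * q * (q - 1) + a3 * q * (q - t) + a4 * (q - 1) * (q - t)) := by
  unfold PVIHamiltonian
  have := ((((hasDerivAt_id p).pow 2).const_mul (q * (q - 1) * (q - t))).sub
    ((hasDerivAt_id p).const_mul
      ((a0 - 1) * q * (q - 1) + a3 * q * (q - t) + a4 * (q - 1) * (q - t)))).add_const
      (a2 * (a1 + a2) * (q - t))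
  refine (this.congr_deriv ?_).deriv
  simp
  ring

theorem pvi_dq (a0 a1 a2 a3 a4 q p t : ℂ) :
    deriv (fun q' => PVIHamiltonian a0 a1 a2 a3 a4 q' p t) q =
      ((q - 1) * (q - t) + q * (q - t) + q * (q - 1)) * p ^ 2
      - ((a0 - 1) * (2 * q - 1) + a3 * (2 * q - t) + a4 * (2 * q - 1 - t)) * p
      + a2 * (a1 + a2) := by
  unfold PVIHamiltonian
  have h := hasDerivAt_id q
  have h1 := h.sub_const 1
  have ht := h.sub_const t
  have := ((((h.mul h1).mul ht).mul_const (p ^ 2)).sub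
    (((((h.const_mul (a0 - 1)).mul h1).add ((h.const_mul a3).mul ht)).add
      ((h1.const_mul a4).mul ht)).mul_const p)).add (ht.const_mul (a2 * (a1 + a2)))
  refine (this.congr_deriv ?_).deriv
  simp
  ring

/-- a solution of the Hamiltonian system with `q(t) ∉ {0,1,t}`
satisfies the Painlevé VI equation. -/
theorem hamiltonian_system_implies_painleveVI
    (α0 α1 α2 α3 α4 : ℂ) (hα : α0 + α1 + 2 * α2 + α3 + α4 = 1)
    (U : Set ℂ) (hUopen : IsOpen U) (hU01 : U ⊆ ({0, 1} : Set ℂ)ᶜ)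
    (q p : ℂ → ℂ)
    (hq : DifferentiableOn ℂ q U) (hp : DifferentiableOn ℂ p U)
    (hsys : SolvesHamSystem α0 α1 α2 α3 α4 U q p)
    (hreg : ∀ t ∈ U, q t ≠ 0 ∧ q t ≠ 1 ∧ q t ≠ t) :
    ∀ t ∈ U,
      deriv (deriv q) t
        = (1 / 2) * (1 / q t + 1 / (q t - 1) + 1 / (q t - t)) * (deriv q t) ^ 2
          - (1 / t + 1 / (t - 1) + 1 / (q t - t)) * deriv q t
          + q t * (q t - 1) * (q t - t) / (t ^ 2 * (t - 1) ^ 2)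
            * (α1 ^ 2 / 2 + (-(α4 ^ 2) / 2) * t / (q t) ^ 2
               + (α3 ^ 2 / 2) * (t - 1) / (q t - 1) ^ 2
               + ((1 - α0 ^ 2) / 2) * (t * (t - 1)) / (q t - t) ^ 2) := by
  intro t ht
  have hnhds := hUopen.mem_nhds ht
  have h01 := hU01 ht
  simp only [Set.mem_compl_iff, Set.mem_insert_iff, Set.mem_singleton_iff, not_or] at h01
  obtain ⟨r0, r1, rt⟩ := hreg t ht
  obtain ⟨e1, e2⟩ := hsys t ht
  rw [pvi_dp] at e1
  rw [pvi_dq] at e2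
  have hqd : HasDerivAt q (deriv q t) t := (hq.differentiableAt hnhds).hasDerivAt
  have hpd : HasDerivAt p (deriv p t) t := (hp.differentiableAt hnhds).hasDerivAt
  have hqdd : HasDerivAt (deriv q) (deriv (deriv q) t) t :=
    ((hq.deriv hUopen).differentiableAt hnhds).hasDerivAt
  have hi := hasDerivAt_id t
  have hL := (hi.mul (hi.sub_const 1)).mul hqdd
  have h1 := hqd.sub_const 1
  have hs := hqd.sub hi
  have hR := ((((hqd.mul h1).mul hs).const_mul 2).mul hpd).sub
    ((((hqd.const_mul (α0 - 1)).mul h1).add ((hqd.const_mul α3).mul hs)).add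
      ((h1.const_mul α4).mul hs))
  have key := hL.unique (hR.congr_of_eventuallyEq (by
    filter_upwards [hnhds] with s hs
    have := (hsys s hs).1
    rw [pvi_dp] at this
    simpa using this))
  simp at key
  refine pvi_alg α0 α1 α2 α3 α4 (q t) (p t) t (deriv q t) (deriv p t) _ hα h01.1
    (sub_ne_zero.2 h01.2) r0 (sub_ne_zero.2 r1) (sub_ne_zero.2 rt) e1 e2 ?_
  linear_combination key
end

section
/- Bäcklund transformation s2: let α0,…,α4 be complex parameters with α0+α1+2α2+α3+α4 = 1 and let q, p be holomorphic functions on an open set U ⊆ ℂ∖{0,1} solving the Hamiltonian system for the Painlevé VI Hamiltonian with parameters (α0,α1,α2,α3,α4), and suppose p is nowhere zero on U. Then the pair (q + α2/p, p) solves the Hamiltonian system with parameters (α0+α2, α1+α2, −α2, α3+α2, α4+α2). -/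
theorem PVI_deriv_p (α0 α1 α2 α3 α4 q p t : ℂ) :
    deriv (fun p' => PVIHamiltonian α0 α1 α2 α3 α4 q p' t) p
      = q * (q - 1) * (q - t) * (2 * p)
        - ((α0 - 1) * q * (q - 1) + α3 * q * (q - t) + α4 * (q - 1) * (q - t)) := by
  have h := ((((hasDerivAt_id p).pow 2).const_mul (q * (q - 1) * (q - t))).sub
    ((hasDerivAt_id p).const_mul
      ((α0 - 1) * q * (q - 1) + α3 * q * (q - t) + α4 * (q - 1) * (q - t)))).add_const
      (α2 * (α1 + α2) * (q - t))
  refine Eq.trans (HasDerivAt.deriv (h.congr_of_eventuallyEq (Filter.Eventually.of_forall ?_))) ?_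
  · intro x
    simp [PVIHamiltonian]
  · simp

theorem PVI_deriv_q (α0 α1 α2 α3 α4 q p t : ℂ) :
    deriv (fun q' => PVIHamiltonian α0 α1 α2 α3 α4 q' p t) q
      = ((q - 1) * (q - t) + q * (q - t) + q * (q - 1)) * p ^ 2
        - ((α0 - 1) * (2 * q - 1) + α3 * (2 * q - t) + α4 * (2 * q - 1 - t)) * p
        + α2 * (α1 + α2) := by
  have h0 := hasDerivAt_id q
  have h1 := h0.sub_const 1
  have ht := h0.sub_const t
  have h := (((((h0.mul h1).mul ht).mul_const (p ^ 2)).sub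
    (((((h0.mul h1).const_mul (α0 - 1)).add ((h0.mul ht).const_mul α3)).add
      ((h1.mul ht).const_mul α4)).mul_const p))).add (ht.const_mul (α2 * (α1 + α2)))
  refine Eq.trans (HasDerivAt.deriv (h.congr_of_eventuallyEq (Filter.Eventually.of_forall ?_))) ?_
  · intro x
    simp only [PVIHamiltonian, Pi.add_apply, Pi.sub_apply, Pi.mul_apply, id]
    ring
  · simp
    ring

/-- the Bäcklund transformation s₂. -/
theorem backlund_s2
    (α0 α1 α2 α3 α4 : ℂ) (hα : α0 + α1 + 2 * α2 + α3 + α4 = 1)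
    (U : Set ℂ) (hUopen : IsOpen U) (hU01 : U ⊆ ({0, 1} : Set ℂ)ᶜ)
    (q p : ℂ → ℂ)
    (hq : DifferentiableOn ℂ q U) (hp : DifferentiableOn ℂ p U)
    (hsys : SolvesHamSystem α0 α1 α2 α3 α4 U q p)
    (hp0 : ∀ t ∈ U, p t ≠ 0) :
    SolvesHamSystem (α0 + α2) (α1 + α2) (-α2) (α3 + α2) (α4 + α2) U
      (fun t => q t + α2 / p t) p := by
  intro t ht
  obtain ⟨h1, h2⟩ := hsys t ht
  have hqd := (hq.differentiableAt (hUopen.mem_nhds ht)).hasDerivAt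
  have hpd := (hp.differentiableAt (hUopen.mem_nhds ht)).hasDerivAt
  have hp' := hp0 t ht
  have hQ : deriv (fun t => q t + α2 / p t) t = deriv q t - α2 * deriv p t / p t ^ 2 := by
    have h := hqd.add ((hasDerivAt_const t α2).div hpd hp')
    refine Eq.trans h.deriv ?_
    ring
  rw [PVI_deriv_p] at h1
  rw [PVI_deriv_q] at h2
  have hα1 : α1 = 1 - α0 - 2 * α2 - α3 - α4 := by linear_combination hα
  subst hα1
  constructor
  · rw [hQ, PVI_deriv_p]
    have e : t * (t - 1) * (deriv q t - α2 * deriv p t / p t ^ 2)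
        = t * (t - 1) * deriv q t - α2 * (t * (t - 1) * deriv p t) / p t ^ 2 := by ring
    rw [e, h1, h2]
    field_simp
    ring
  · rw [PVI_deriv_q, h2]
    field_simp
    ring
end

section
/- The E_VI equation: let α0,…,α4 be complex parameters with α0+α1+2α2+α3+α4 = 1, let q, p be holomorphic functions on an open set U ⊆ ℂ∖{0,1} solving the Hamiltonian system for the Painlevé VI Hamiltonian, and set b1 = (α3+α4)/2, b2 = (α4−α3)/2, b3 = (α0+α1−1)/2, b4 = (α0−α1−1)/2, C = (α0−1)²+α1²+α3²+α4². Define h(t) = h0(q(t),p(t),t) − (C/24)(2t−1), where h0 is the modified Hamiltonian. Then (dh/dt)·(t(t−1)d²h/dt²)² + ((dh/dt)(2h − (2t−1)dh/dt) + b1b2b3b4)² = ∏_{k=1}^4 (dh/dt + b_k²) on U. -/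
/-- The modified Painlevé VI Hamiltonian h₀. -/
noncomputable def PVIModifiedHamiltonian (α0 α1 α2 α3 α4 q p t : ℂ) : ℂ :=
  PVIHamiltonian α0 α1 α2 α3 α4 q p t
    + t / 12 * (2 * (α0 - 1) ^ 2 - α1 ^ 2 + 2 * α3 ^ 2 - α4 ^ 2 + 6 * (α0 - 1) * α3)
    + (t - 1) / 12 * (2 * (α0 - 1) ^ 2 - α1 ^ 2 - α3 ^ 2 + 2 * α4 ^ 2 + 6 * (α0 - 1) * α4)

theorem EVI_alg (a α1 α3 α4 q p : ℂ) (D E W K : ℂ)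
    (hK : K = ((a + α3 + α4) ^ 2 - α1 ^ 2) / 4)
    (hD : D = -q * (q - 1) * p ^ 2 + (α3 * q + α4 * (q - 1)) * p - ((α3 + α4) / 2) ^ 2)
    (hE : E = (-(2 * q - 1) * p ^ 2 + (α3 + α4) * p)
          * (2 * q * (q - 1) * q * p - (a * q * (q - 1) + α3 * q * q + α4 * (q - 1) * q))
        - (-2 * q * (q - 1) * p + α3 * q + α4 * (q - 1))
          * ((q * (q - 1) + (2 * q - 1) * q) * p ^ 2
            - (a * (2 * q - 1) + α3 * (2 * q) + α4 * (2 * q - 1)) * p + K))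
    (hW : W = 2 * (q * (q - 1) * q * p ^ 2
          - (a * q * (q - 1) + α3 * q * q + α4 * (q - 1) * q) * p + K * q)
        - (1 / 6) * (2 * a ^ 2 - α1 ^ 2 - α3 ^ 2 + 2 * α4 ^ 2 + 6 * a * α4)
        + (a ^ 2 + α1 ^ 2 + α3 ^ 2 + α4 ^ 2) / 12 + D) :
    D * E ^ 2 + (D * W + (α3 + α4) / 2 * ((α4 - α3) / 2) * ((a + α1) / 2) * ((a - α1) / 2)) ^ 2
      = (D + ((α3 + α4) / 2) ^ 2) * (D + ((α4 - α3) / 2) ^ 2)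
          * (D + ((a + α1) / 2) ^ 2) * (D + ((a - α1) / 2) ^ 2) := by
  subst hW hE hD hK
  ring

theorem EVI_Hp (α0 α1 α2 α3 α4 q p t : ℂ) :
    deriv (fun p' => PVIHamiltonian α0 α1 α2 α3 α4 q p' t) p
      = 2 * q * (q - 1) * (q - t) * p
        - ((α0 - 1) * q * (q - 1) + α3 * q * (q - t) + α4 * (q - 1) * (q - t)) := by
  unfold PVIHamiltonian
  have h1 := hasDerivAt_id' p
  refine HasDerivAt.deriv ?_
  refine HasDerivAt.congr_deriv ((((h1.pow 2).const_mul (q * (q - 1) * (q - t))).sub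
    (h1.const_mul ((α0 - 1) * q * (q - 1) + α3 * q * (q - t) + α4 * (q - 1) * (q - t)))).add_const
    (α2 * (α1 + α2) * (q - t))) ?_
  push_cast
  ring

/-- derivative of the Hamiltonian along a curve -/
theorem EVI_H (α0 α1 α2 α3 α4 : ℂ) (q p r : ℂ → ℂ) (q' p' r' t : ℂ)
    (hq : HasDerivAt q q' t) (hp : HasDerivAt p p' t) (hr : HasDerivAt r r' t) :
    HasDerivAt (fun s => PVIHamiltonian α0 α1 α2 α3 α4 (q s) (p s) (r s))
      (((q t * (q t - 1) + (2 * q t - 1) * (q t - r t)) * p t ^ 2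
            - ((α0 - 1) * (2 * q t - 1) + α3 * (2 * q t - r t) + α4 * (2 * q t - 1 - r t)) * p t
            + α2 * (α1 + α2)) * q'
       + (2 * q t * (q t - 1) * (q t - r t) * p t
        - ((α0 - 1) * q t * (q t - 1) + α3 * q t * (q t - r t)
          + α4 * (q t - 1) * (q t - r t))) * p'
       + (-q t * (q t - 1) * p t ^ 2 + (α3 * q t + α4 * (q t - 1)) * p t
          - α2 * (α1 + α2)) * r') t := by
  unfold PVIHamiltonian
  have h1 := hq.sub_const 1
  have h2 := hq.sub hr
  refine HasDerivAt.congr_deriv (((((hq.mul h1).mul h2).mul (hp.pow 2)).sub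
    (((((hq.const_mul (α0 - 1)).mul h1).add ((hq.const_mul α3).mul h2)).add
      ((h1.const_mul α4).mul h2)).mul hp)).add (h2.const_mul (α2 * (α1 + α2)))) ?_
  simp only [Pi.mul_apply, Pi.sub_apply, Pi.add_apply, Pi.pow_apply]
  push_cast
  ring

/-- the E_VI equation for the (shifted) Hamiltonian. -/
theorem EVI_equation
    (α0 α1 α2 α3 α4 : ℂ) (hα : α0 + α1 + 2 * α2 + α3 + α4 = 1)
    (U : Set ℂ) (hUopen : IsOpen U) (hU01 : U ⊆ ({0, 1} : Set ℂ)ᶜ)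
    (q p : ℂ → ℂ)
    (hq : DifferentiableOn ℂ q U) (hp : DifferentiableOn ℂ p U)
    (hsys : SolvesHamSystem α0 α1 α2 α3 α4 U q p)
    (b1 b2 b3 b4 C : ℂ)
    (hb1 : b1 = (α3 + α4) / 2) (hb2 : b2 = (α4 - α3) / 2)
    (hb3 : b3 = (α0 + α1 - 1) / 2) (hb4 : b4 = (α0 - α1 - 1) / 2)
    (hC : C = (α0 - 1) ^ 2 + α1 ^ 2 + α3 ^ 2 + α4 ^ 2)
    (h : ℂ → ℂ)
    (hh : h = fun t => PVIModifiedHamiltonian α0 α1 α2 α3 α4 (q t) (p t) t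
        - C / 24 * (2 * t - 1)) :
    ∀ t ∈ U,
      deriv h t * (t * (t - 1) * deriv (deriv h) t) ^ 2
        + (deriv h t * (2 * h t - (2 * t - 1) * deriv h t) + b1 * b2 * b3 * b4) ^ 2
      = (deriv h t + b1 ^ 2) * (deriv h t + b2 ^ 2)
          * (deriv h t + b3 ^ 2) * (deriv h t + b4 ^ 2) := by
  have ne0 : ∀ t ∈ U, t * (t - 1) ≠ 0 := by
    intro t ht
    have := hU01 ht
    simp only [Set.mem_compl_iff, Set.mem_insert_iff, Set.mem_singleton_iff, not_or] at this
    exact mul_ne_zero this.1 (sub_ne_zero.2 this.2)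
  have dq : ∀ t ∈ U, HasDerivAt q (deriv q t) t := fun t ht =>
    (hq.differentiableAt (hUopen.mem_nhds ht)).hasDerivAt
  have dp : ∀ t ∈ U, HasDerivAt p (deriv p t) t := fun t ht =>
    (hp.differentiableAt (hUopen.mem_nhds ht)).hasDerivAt
  have hK : α2 * (α1 + α2) = ((α0 - 1 + α3 + α4) ^ 2 - α1 ^ 2) / 4 := by
    have : α2 = (1 - α0 - α1 - α3 - α4) / 2 := by linear_combination hα / 2
    rw [this]; ring
  have eqs : ∀ t ∈ U,
      t * (t - 1) * deriv q t = 2 * q t * (q t - 1) * (q t - t) * p t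
        - ((α0 - 1) * q t * (q t - 1) + α3 * q t * (q t - t) + α4 * (q t - 1) * (q t - t)) ∧
      t * (t - 1) * deriv p t = -((q t * (q t - 1) + (2 * q t - 1) * (q t - t)) * p t ^ 2
            - ((α0 - 1) * (2 * q t - 1) + α3 * (2 * q t - t) + α4 * (2 * q t - 1 - t)) * p t
            + α2 * (α1 + α2)) := by
    intro t ht
    obtain ⟨e1, e2⟩ := hsys t ht
    rw [EVI_Hp] at e1
    have := EVI_H α0 α1 α2 α3 α4 (fun s => s) (fun _ => p t) (fun _ => t) 1 0 0 (q t)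
      (hasDerivAt_id' _) (hasDerivAt_const _ _) (hasDerivAt_const _ _)
    rw [this.deriv] at e2
    refine ⟨e1, ?_⟩
    rw [e2]; ring
  have d1 : ∀ t ∈ U, deriv h t = -q t * (q t - 1) * p t ^ 2
      + (α3 * q t + α4 * (q t - 1)) * p t - ((α3 + α4) / 2) ^ 2 := by
    intro t ht
    obtain ⟨e1, e2⟩ := eqs t ht
    have hd := EVI_H α0 α1 α2 α3 α4 q p (fun s => s) _ _ 1 t (dq t ht) (dp t ht) (hasDerivAt_id' _)
    have i := hasDerivAt_id' t
    have hd2 := ((hd.add ((i.div_const 12).mul_const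
      (2 * (α0 - 1) ^ 2 - α1 ^ 2 + 2 * α3 ^ 2 - α4 ^ 2 + 6 * (α0 - 1) * α3))).add
      (((i.sub_const 1).div_const 12).mul_const
      (2 * (α0 - 1) ^ 2 - α1 ^ 2 - α3 ^ 2 + 2 * α4 ^ 2 + 6 * (α0 - 1) * α4))).sub
      (((i.const_mul 2).sub_const 1).const_mul (C / 24))
    have hd3 := hd2.congr_of_eventuallyEq (f₁ := h)
      (Filter.Eventually.of_forall fun s => by rw [hh]; rfl)
    rw [hd3.deriv]
    set X := (q t * (q t - 1) + (2 * q t - 1) * (q t - t)) * p t ^ 2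
            - ((α0 - 1) * (2 * q t - 1) + α3 * (2 * q t - t) + α4 * (2 * q t - 1 - t)) * p t
            + α2 * (α1 + α2)
    set Y := 2 * q t * (q t - 1) * (q t - t) * p t
        - ((α0 - 1) * q t * (q t - 1) + α3 * q t * (q t - t) + α4 * (q t - 1) * (q t - t))
    have hz : X * deriv q t + Y * deriv p t = 0 := by
      apply mul_left_cancel₀ (ne0 t ht)
      linear_combination X * e1 + Y * e2
    rw [hz, hC, hK]
    ring
  intro t ht
  obtain ⟨e1, e2⟩ := eqs t ht
  have d2 : deriv (deriv h) t = (-(2 * q t - 1) * p t ^ 2 + (α3 + α4) * p t) * deriv q t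
      + (-2 * q t * (q t - 1) * p t + α3 * q t + α4 * (q t - 1)) * deriv p t := by
    have ev : deriv h =ᶠ[nhds t] fun t => -q t * (q t - 1) * p t ^ 2
      + (α3 * q t + α4 * (q t - 1)) * p t - ((α3 + α4) / 2) ^ 2 := by
      filter_upwards [hUopen.mem_nhds ht] with s hs using d1 s hs
    rw [ev.deriv_eq]
    refine HasDerivAt.deriv ?_
    have hq1 := (dq t ht).sub_const 1
    refine HasDerivAt.congr_deriv (((((dq t ht).neg.mul hq1).mul ((dp t ht).pow 2)).add
      ((((dq t ht).const_mul α3).add (hq1.const_mul α4)).mul (dp t ht))).sub_const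
      (((α3 + α4) / 2) ^ 2)) ?_
    simp only [Pi.mul_apply, Pi.sub_apply, Pi.add_apply, Pi.pow_apply, Pi.neg_apply]
    push_cast
    ring
  have key := EVI_alg (α0 - 1) α1 α3 α4 (q t) (p t) (deriv h t) (t * (t - 1) * deriv (deriv h) t)
    (2 * h t - (2 * t - 1) * deriv h t) (α2 * (α1 + α2)) hK (d1 t ht)
    (by
      rw [d2]
      linear_combination (-(2 * q t - 1) * p t ^ 2 + (α3 + α4) * p t) * e1
        + (-2 * q t * (q t - 1) * p t + α3 * q t + α4 * (q t - 1)) * e2)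
    (by
      rw [d1 t ht, hh]
      simp only [PVIModifiedHamiltonian, PVIHamiltonian]
      rw [hC, hK]
      ring)
  rw [hb1, hb2, hb3, hb4]
  linear_combination key
end

section
/- Third-order equation for the modified Hamiltonian: let α0,…,α4 be complex parameters with α0+α1+2α2+α3+α4 = 1, let q, p be holomorphic functions on an open set U ⊆ ℂ∖{0,1} solving the Hamiltonian system for the Painlevé VI Hamiltonian, and set h0(t) = h0(q(t),p(t),t) (the modified Hamiltonian evaluated along the solution). Write δ for the operator f ↦ t(t−1)f′(t), and set C = (α0−1)²+α1²+α3²+α4² and G(t) = (α4−α3)(α3+α4)(α0+α1−1)(α0−α1−1)t + (α3−α1)(α3+α1)(α0+α4−1)(α0−α4−1). Then on U: δ³(h0) + 2(1−2t)δ²(h0) + 6δ(h0)² + 4(1−2t)h0·δ(h0) − [((C−6)t(t−1)+C−3)/3]·δ(h0) + 2t(t−1)h0² + [Ct(t−1)(2t−1)/6]·h0 − t(t−1)G(t)/8 = 0. -/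
/-- The operator δ = t(t-1) d/dt. -/
noncomputable def delOp (f : ℂ → ℂ) : ℂ → ℂ := fun t => t * (t - 1) * deriv f t

theorem pvi_delOp_congr {U : Set ℂ} (hU : IsOpen U) {f g : ℂ → ℂ} (hfg : ∀ t ∈ U, f t = g t) :
    ∀ t ∈ U, delOp f t = delOp g t := by
  intro t ht
  have : f =ᶠ[nhds t] g := by
    filter_upwards [hU.mem_nhds ht] with x hx using hfg x hx
  simp only [delOp, this.deriv_eq]

theorem pvi_final (b k a s a3 a4 q p t h K L M Q R : ℂ)
    (hs : s = (b + a3 + a4) ^ 2 - 4 * k) 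
    (ha : a = -k + (2 * b ^ 2 - s + 2 * a3 ^ 2 - a4 ^ 2 + 6 * b * a3) / 12
        + (2 * b ^ 2 - s - a3 ^ 2 + 2 * a4 ^ 2 + 6 * b * a4) / 12)
    (hh : h = q * (q - 1) * (q - t) * p ^ 2
      - (b * q * (q - 1) + a3 * q * (q - t) + a4 * (q - 1) * (q - t)) * p + k * q + a * t
      - (2 * b ^ 2 - s - a3 ^ 2 + 2 * a4 ^ 2 + 6 * b * a4) / 12)
    (hK : K = -(q * (q - 1)) * p ^ 2 + (a3 * q + a4 * (q - 1)) * p + a)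
    (hQ : Q = 2 * (q * (q - 1) * (q - t)) * p
      - (b * q * (q - 1) + a3 * q * (q - t) + a4 * (q - 1) * (q - t)))
    (hR : R = -(((2 * q - 1) * (q - t) + q * (q - 1)) * p ^ 2
      - (b * (2 * q - 1) + a3 * (2 * q - t) + a4 * (2 * q - t - 1)) * p + k))
    (hL : L = (-(2 * q - 1) * p ^ 2 + (a3 + a4) * p) * Q
      + (-(2 * q * (q - 1)) * p + (a3 * q + a4 * (q - 1))) * R)
    (hM : M = (-2 * Q * p ^ 2 - (2 * q - 1) * (2 * p * R) + (a3 + a4) * R) * Q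
      + (-(2 * q - 1) * p ^ 2 + (a3 + a4) * p) *
        (2 * ((2 * q - 1) * (q - t) * Q + q * (q - 1) * (Q - t * (t - 1))) * p
          + 2 * (q * (q - 1) * (q - t)) * R
          - (b * (2 * q - 1) * Q + a3 * (Q * (q - t) + q * (Q - t * (t - 1)))
            + a4 * (Q * (q - t) + (q - 1) * (Q - t * (t - 1)))))
      + (-(2 * (2 * q - 1) * Q) * p - 2 * q * (q - 1) * R + (a3 + a4) * Q) * R
      + (-(2 * q * (q - 1)) * p + (a3 * q + a4 * (q - 1))) *
        (-((2 * Q * (q - t) + (2 * q - 1) * (Q - t * (t - 1)) + (2 * q - 1) * Q) * p ^ 2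
          + ((2 * q - 1) * (q - t) + q * (q - 1)) * (2 * p * R)
          - (b * (2 * Q) + a3 * (2 * Q - t * (t - 1)) + a4 * (2 * Q - t * (t - 1))) * p
          - (b * (2 * q - 1) + a3 * (2 * q - t) + a4 * (2 * q - t - 1)) * R))) :
    ((2 * t - 1) * ((2 * t - 1) * K + L) + 2 * t * (t - 1) * K + (2 * t - 1) * L + M)
      + 2 * (1 - 2 * t) * ((2 * t - 1) * K + L) + 6 * t * (t - 1) * K ^ 2
      + 4 * (1 - 2 * t) * h * K
      - (((b ^ 2 + s + a3 ^ 2 + a4 ^ 2) - 6) * t * (t - 1) + (b ^ 2 + s + a3 ^ 2 + a4 ^ 2) - 3) / 3 * K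
      + 2 * h ^ 2 + (b ^ 2 + s + a3 ^ 2 + a4 ^ 2) * (2 * t - 1) / 6 * h
      - ((a4 - a3) * (a3 + a4) * (b ^ 2 - s) * t + (a3 ^ 2 - s) * (b ^ 2 - a4 ^ 2)) / 8 = 0 := by
  subst hM hL hQ hR hK hh ha hs
  ring

/-- third-order equation for the modified Hamiltonian along a solution. -/
theorem third_order_equation_for_modified_hamiltonian
    (α0 α1 α2 α3 α4 : ℂ) (hα : α0 + α1 + 2 * α2 + α3 + α4 = 1)
    (U : Set ℂ) (hUopen : IsOpen U) (hU01 : U ⊆ ({0, 1} : Set ℂ)ᶜ)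
    (q p : ℂ → ℂ)
    (hq : DifferentiableOn ℂ q U) (hp : DifferentiableOn ℂ p U)
    (hsys : SolvesHamSystem α0 α1 α2 α3 α4 U q p)
    (C : ℂ) (hC : C = (α0 - 1) ^ 2 + α1 ^ 2 + α3 ^ 2 + α4 ^ 2)
    (G : ℂ → ℂ)
    (hG : G = fun t => (α4 - α3) * (α3 + α4) * (α0 + α1 - 1) * (α0 - α1 - 1) * t
        + (α3 - α1) * (α3 + α1) * (α0 + α4 - 1) * (α0 - α4 - 1))
    (h : ℂ → ℂ)
    (hh : h = fun t => PVIModifiedHamiltonian α0 α1 α2 α3 α4 (q t) (p t) t) :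
    ∀ t ∈ U,
      delOp (delOp (delOp h)) t + 2 * (1 - 2 * t) * delOp (delOp h) t
        + 6 * (delOp h t) ^ 2 + 4 * (1 - 2 * t) * h t * delOp h t
        - ((C - 6) * t * (t - 1) + C - 3) / 3 * delOp h t
        + 2 * t * (t - 1) * (h t) ^ 2 + C * t * (t - 1) * (2 * t - 1) / 6 * h t
        - t * (t - 1) * G t / 8 = 0 := by
  intro t ht
  subst hC hG
  have hT : ∀ t ∈ U, t * (t - 1) ≠ 0 := by
    intro t ht
    have := hU01 ht
    simp only [Set.mem_compl_iff, Set.mem_insert_iff, Set.mem_singleton_iff, not_or] at this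
    exact mul_ne_zero this.1 (sub_ne_zero.2 this.2)
  obtain ⟨b, hb⟩ : ∃ b, b = α0 - 1 := ⟨_, rfl⟩
  obtain ⟨k, hk⟩ : ∃ k, k = α2 * (α1 + α2) := ⟨_, rfl⟩
  obtain ⟨a, ha⟩ : ∃ a, a = -k + (2 * b ^ 2 - α1 ^ 2 + 2 * α3 ^ 2 - α4 ^ 2 + 6 * b * α3) / 12
        + (2 * b ^ 2 - α1 ^ 2 - α3 ^ 2 + 2 * α4 ^ 2 + 6 * b * α4) / 12 := ⟨_, rfl⟩
  obtain ⟨Q, hQ⟩ : ∃ Q : ℂ → ℂ, Q = fun t => 2 * (q t * (q t - 1) * (q t - t)) * p t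
      - (b * q t * (q t - 1) + α3 * q t * (q t - t) + α4 * (q t - 1) * (q t - t)) := ⟨_, rfl⟩
  obtain ⟨R, hR⟩ : ∃ R : ℂ → ℂ, R = fun t =>
      -(((2 * q t - 1) * (q t - t) + q t * (q t - 1)) * p t ^ 2
      - (b * (2 * q t - 1) + α3 * (2 * q t - t) + α4 * (2 * q t - t - 1)) * p t + k) := ⟨_, rfl⟩
  have dq : ∀ t ∈ U, HasDerivAt q (Q t / (t * (t - 1))) t := by
    intro t ht
    have h1 := (hq.differentiableAt (hUopen.mem_nhds ht)).hasDerivAt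
    have h2 := (hsys t ht).1
    have h3 : HasDerivAt (fun p' => PVIHamiltonian α0 α1 α2 α3 α4 (q t) p' t) (Q t) (p t) := by
      have i := hasDerivAt_id' (p t)
      have := (((i.pow 2).const_mul (q t * (q t - 1) * (q t - t))).sub (i.const_mul
        ((α0 - 1) * q t * (q t - 1) + α3 * q t * (q t - t) + α4 * (q t - 1) * (q t - t)))).add_const
        (α2 * (α1 + α2) * (q t - t))
      refine this.congr_deriv ?_
      simp only [hQ, hb]; push_cast; ring
    rw [h3.deriv] at h2
    refine h1.congr_deriv ?_
    rw [eq_div_iff (hT t ht), ← h2]; ring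
  have dp : ∀ t ∈ U, HasDerivAt p (R t / (t * (t - 1))) t := by
    intro t ht
    have h1 := (hp.differentiableAt (hUopen.mem_nhds ht)).hasDerivAt
    have h2 := (hsys t ht).2
    have h3 : HasDerivAt (fun q' => PVIHamiltonian α0 α1 α2 α3 α4 q' (p t) t) (-R t) (q t) := by
      have i := hasDerivAt_id' (q t)
      have i1 := i.sub_const 1
      have it := i.sub_const t
      have := ((((i.mul i1).mul it).mul_const (p t ^ 2)).sub
        (((((i.const_mul (α0 - 1)).mul i1).add ((i.const_mul α3).mul it)).add
          ((i1.const_mul α4).mul it)).mul_const (p t))).add (it.const_mul (α2 * (α1 + α2)))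
      refine this.congr_deriv ?_
      simp only [hR, hb, hk, Pi.mul_apply]; ring
    rw [h3.deriv] at h2
    refine h1.congr_deriv ?_
    rw [eq_div_iff (hT t ht)]; linear_combination h2
  obtain ⟨K, hK⟩ : ∃ K : ℂ → ℂ, K = fun t => -(q t * (q t - 1)) * p t ^ 2
    + (α3 * q t + α4 * (q t - 1)) * p t + a := ⟨_, rfl⟩
  obtain ⟨A, hA⟩ : ∃ A : ℂ → ℂ, A = fun t =>
    -(2 * q t - 1) * p t ^ 2 + (α3 + α4) * p t := ⟨_, rfl⟩
  obtain ⟨B, hB⟩ : ∃ B : ℂ → ℂ, B = fun t =>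
    -(2 * q t * (q t - 1)) * p t + (α3 * q t + α4 * (q t - 1)) := ⟨_, rfl⟩
  obtain ⟨dA, hdA⟩ : ∃ dA : ℂ → ℂ, dA = fun t =>
    -2 * Q t * p t ^ 2 - (2 * q t - 1) * (2 * p t * R t) + (α3 + α4) * R t := ⟨_, rfl⟩
  obtain ⟨dB, hdB⟩ : ∃ dB : ℂ → ℂ, dB = fun t =>
    -(2 * (2 * q t - 1) * Q t) * p t - 2 * q t * (q t - 1) * R t + (α3 + α4) * Q t := ⟨_, rfl⟩
  obtain ⟨dQ, hdQ⟩ : ∃ dQ : ℂ → ℂ, dQ = fun t =>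
    2 * ((2 * q t - 1) * (q t - t) * Q t + q t * (q t - 1) * (Q t - t * (t - 1))) * p t
          + 2 * (q t * (q t - 1) * (q t - t)) * R t
          - (b * (2 * q t - 1) * Q t + α3 * (Q t * (q t - t) + q t * (Q t - t * (t - 1)))
            + α4 * (Q t * (q t - t) + (q t - 1) * (Q t - t * (t - 1)))) := ⟨_, rfl⟩
  obtain ⟨dR, hdR⟩ : ∃ dR : ℂ → ℂ, dR = fun t =>
    -((2 * Q t * (q t - t) + (2 * q t - 1) * (Q t - t * (t - 1)) + (2 * q t - 1) * Q t) * p t ^ 2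
          + ((2 * q t - 1) * (q t - t) + q t * (q t - 1)) * (2 * p t * R t)
          - (b * (2 * Q t) + α3 * (2 * Q t - t * (t - 1)) + α4 * (2 * Q t - t * (t - 1))) * p t
          - (b * (2 * q t - 1) + α3 * (2 * q t - t) + α4 * (2 * q t - t - 1)) * R t) := ⟨_, rfl⟩
  obtain ⟨L, hL⟩ : ∃ L : ℂ → ℂ, L = fun t => A t * Q t + B t * R t := ⟨_, rfl⟩
  obtain ⟨M, hM⟩ : ∃ M : ℂ → ℂ, M = fun t => dA t * Q t + A t * dQ t + dB t * R t + B t * dR t :=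
    ⟨_, rfl⟩
  have dh : ∀ t ∈ U, HasDerivAt h (K t) t := by
    intro t ht
    have hTt := hT t ht
    have i := hasDerivAt_id' t
    have q0 := dq t ht
    have q1 := q0.sub_const 1
    have qt := q0.sub i
    have p0 := dp t ht
    have := ((((((q0.mul q1).mul qt).mul (p0.pow 2)).sub
        (((((q0.const_mul (α0 - 1)).mul q1).add ((q0.const_mul α3).mul qt)).add
          ((q1.const_mul α4).mul qt)).mul p0)).add (qt.const_mul (α2 * (α1 + α2)))).add
        ((i.div_const 12).mul_const
          (2 * (α0 - 1) ^ 2 - α1 ^ 2 + 2 * α3 ^ 2 - α4 ^ 2 + 6 * (α0 - 1) * α3))).add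
        (((i.sub_const 1).div_const 12).mul_const
          (2 * (α0 - 1) ^ 2 - α1 ^ 2 - α3 ^ 2 + 2 * α4 ^ 2 + 6 * (α0 - 1) * α4))
    rw [hh]
    refine this.congr_deriv ?_
    simp only [hK, hQ, hR, ha, hb, hk, Pi.mul_apply, Pi.sub_apply, Pi.add_apply, Pi.pow_apply]
    push_cast
    generalize (t * (t - 1)) = T at *
    field_simp
    ring
  have dK : ∀ t ∈ U, HasDerivAt K (L t / (t * (t - 1))) t := by
    intro t ht
    have q0 := dq t ht
    have q1 := q0.sub_const 1
    have p0 := dp t ht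
    have := (((q0.mul q1).neg.mul (p0.pow 2)).add
      (((q0.const_mul α3).add (q1.const_mul α4)).mul p0)).add_const a
    rw [hK]
    refine this.congr_deriv ?_
    simp only [hL, hA, hB, Pi.mul_apply, Pi.sub_apply, Pi.add_apply, Pi.pow_apply, Pi.neg_apply]
    push_cast
    ring
  have dA' : ∀ t ∈ U, HasDerivAt A (dA t / (t * (t - 1))) t := by
    intro t ht
    have q0 := dq t ht
    have p0 := dp t ht
    have := (((q0.const_mul 2).sub_const 1).neg.mul (p0.pow 2)).add (p0.const_mul (α3 + α4))
    rw [hA]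
    refine this.congr_deriv ?_
    simp only [hdA, Pi.mul_apply, Pi.sub_apply, Pi.add_apply, Pi.pow_apply, Pi.neg_apply]
    push_cast
    ring
  have dB' : ∀ t ∈ U, HasDerivAt B (dB t / (t * (t - 1))) t := by
    intro t ht
    have q0 := dq t ht
    have q1 := q0.sub_const 1
    have p0 := dp t ht
    have := (((q0.const_mul 2).mul q1).neg.mul p0).add ((q0.const_mul α3).add (q1.const_mul α4))
    rw [hB]
    refine this.congr_deriv ?_
    simp only [hdB, Pi.mul_apply, Pi.sub_apply, Pi.add_apply, Pi.pow_apply, Pi.neg_apply]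
    ring
  have dQ' : ∀ t ∈ U, HasDerivAt Q (dQ t / (t * (t - 1))) t := by
    intro t ht
    have hTt := hT t ht
    have i := hasDerivAt_id' t
    have q0 := dq t ht
    have q1 := q0.sub_const 1
    have qt := q0.sub i
    have p0 := dp t ht
    have := ((((q0.mul q1).mul qt).const_mul 2).mul p0).sub
        ((((q0.const_mul b).mul q1).add ((q0.const_mul α3).mul qt)).add
          ((q1.const_mul α4).mul qt))
    generalize hX : Q t = X at *
    generalize hY : R t = Y at *
    rw [hQ]
    refine this.congr_deriv ?_
    simp only [hdQ, hX, hY, Pi.mul_apply, Pi.sub_apply, Pi.add_apply, Pi.pow_apply, Pi.neg_apply]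
    generalize (t * (t - 1)) = T at *
    field_simp
    ring
  have dR' : ∀ t ∈ U, HasDerivAt R (dR t / (t * (t - 1))) t := by
    intro t ht
    have hTt := hT t ht
    have i := hasDerivAt_id' t
    have q0 := dq t ht
    have q1 := q0.sub_const 1
    have q2 := q0.const_mul 2
    have qt := q0.sub i
    have p0 := dp t ht
    have := ((((((q2.sub_const 1).mul qt).add (q0.mul q1)).mul (p0.pow 2)).sub
        (((((q2.sub_const 1).const_mul b).add ((q2.sub i).const_mul α3)).add
          (((q2.sub i).sub_const 1).const_mul α4)).mul p0)).add_const k).neg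
    generalize hX : Q t = X at *
    generalize hY : R t = Y at *
    rw [hR]
    refine this.congr_deriv ?_
    simp only [hdR, hX, hY, Pi.mul_apply, Pi.sub_apply, Pi.add_apply, Pi.pow_apply, Pi.neg_apply]
    push_cast
    generalize (t * (t - 1)) = T at *
    field_simp
    ring
  have dL : ∀ t ∈ U, HasDerivAt L (M t / (t * (t - 1))) t := by
    intro t ht
    have := ((dA' t ht).mul (dQ' t ht)).add ((dB' t ht).mul (dR' t ht))
    rw [hL]
    refine this.congr_deriv ?_
    simp only [hM]
    ring
  have e1 : ∀ t ∈ U, delOp h t = t * (t - 1) * K t := by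
    intro t ht
    simp only [delOp, (dh t ht).deriv]
  have dT : ∀ t : ℂ, HasDerivAt (fun t : ℂ => t * (t - 1)) (2 * t - 1) t := by
    intro t
    have i := hasDerivAt_id' t
    refine (i.mul (i.sub_const 1)).congr_deriv ?_
    ring
  have e2 : ∀ t ∈ U, delOp (delOp h) t = t * (t - 1) * ((2 * t - 1) * K t + L t) := by
    intro t ht
    have hTt := hT t ht
    rw [pvi_delOp_congr hUopen e1 t ht]
    have := (dT t).mul (dK t ht)
    have h2 : deriv (fun t => t * (t - 1) * K t) t = _ := this.deriv
    simp only [delOp]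
    rw [h2, mul_div_cancel₀ _ hTt]
  have e3 : ∀ t ∈ U, delOp (delOp (delOp h)) t = t * (t - 1) *
      ((2 * t - 1) * ((2 * t - 1) * K t + L t) + 2 * t * (t - 1) * K t + (2 * t - 1) * L t + M t) := by
    intro t ht
    have hTt := hT t ht
    rw [pvi_delOp_congr hUopen e2 t ht]
    have i := hasDerivAt_id' t
    have := (dT t).mul (((((i.const_mul 2).sub_const 1).mul (dK t ht)).add (dL t ht)))
    have h2 : deriv (fun t => t * (t - 1) * ((2 * t - 1) * K t + L t)) t = _ := this.deriv
    simp only [delOp]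
    rw [h2]
    simp only [Pi.mul_apply, Pi.sub_apply, Pi.add_apply]
    have : ∀ x, t * (t - 1) * (x / (t * (t - 1))) = x := fun x => mul_div_cancel₀ _ hTt
    linear_combination t * (t - 1) * ((2 * t - 1) * this (L t) + this (M t))
  have hs : α1 ^ 2 = (b + α3 + α4) ^ 2 - 4 * k := by
    have : b + α3 + α4 = - (α1 + 2 * α2) := by rw [hb]; linear_combination hα
    rw [this, hk]; ring
  have fin := pvi_final b k a (α1 ^ 2) α3 α4 (q t) (p t) t (h t) (K t) (L t) (M t) (Q t) (R t)
    hs ha (by rw [hh, ha, hk, hb]; simp only [PVIModifiedHamiltonian, PVIHamiltonian]; ring)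
    (by rw [hK]) (by rw [hQ]) (by rw [hR]) (by rw [hL, hA, hB])
    (by rw [hM, hA, hB, hdA, hdB, hdQ, hdR])
  rw [e3 t ht, e2 t ht, e1 t ht]
  have hb' : α0 = b + 1 := by rw [hb]; ring
  simp only [hb']
  linear_combination t * (t - 1) * fin
end

section
/- The group defined by the presentation ⟨a, x | a⁶ = 1, x² = a³, axa = x⟩ is isomorphic to the dicyclic group of order 12 (the generalized quaternion/dicyclic group Dic₃, i.e. QuaternionGroup 3). -/
/-- Generators of the presentation ⟨a, x | a⁶ = 1, x² = a³, axa = x⟩. -/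
inductive DicGen
  | a
  | x

/-- The relations of the presentation ⟨a, x | a⁶ = 1, x² = a³, axa = x⟩. -/
def dicRels : Set (FreeGroup DicGen) :=
  { FreeGroup.of DicGen.a ^ 6,
    FreeGroup.of DicGen.x ^ 2 * (FreeGroup.of DicGen.a ^ 3)⁻¹,
    FreeGroup.of DicGen.a * FreeGroup.of DicGen.x * FreeGroup.of DicGen.a
      * (FreeGroup.of DicGen.x)⁻¹ }

theorem dic_hom_aux {G : Type*} [Group G] (A X : G) (h6 : A ^ 6 = 1) (h2 : X ^ 2 = A ^ 3)
    (hx : A * X * A = X) :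
    ∃ g : QuaternionGroup 3 →* G, g (QuaternionGroup.a 1) = A ∧ g (QuaternionGroup.xa 0) = X := by
  let e : ZMod (2 * 3) → G := fun i => A ^ i.val
  have eadd : ∀ i j, e (i + j) = e i * e j := by
    intro i j
    change A ^ (i + j).val = A ^ i.val * A ^ j.val
    rw [ZMod.val_add, ← pow_add]
    exact (pow_eq_pow_mod _ h6).symm
  have e0 : e 0 = 1 := pow_zero A
  have e1 : e 1 = A := pow_one A
  have e3 : e 3 = X * X := by
    rw [← pow_two, h2]; rfl
  have esub : ∀ i j, e (j - i) = (e i)⁻¹ * e j := by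
    intro i j
    rw [eq_inv_mul_iff_mul_eq, ← eadd]
    congr 1
    ring
  have hpow : ∀ n : ℕ, A ^ n * X * A ^ n = X := by
    intro n
    induction n with
    | zero => simp
    | succ n ih =>
      calc A ^ (n + 1) * X * A ^ (n + 1) = A ^ n * (A * X * A) * A ^ n := by
            rw [pow_succ A n]
            nth_rewrite 2 [← pow_succ A n]
            rw [pow_succ' A n]
            simp only [mul_assoc]
        _ = X := by rw [hx, ih]
  have ex : ∀ i, e i * X = X * (e i)⁻¹ := by
    intro i
    rw [eq_mul_inv_iff_mul_eq]
    exact hpow _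
  have ex' : ∀ i, (e i) * (X * X) = X * X * e i := by
    intro i
    rw [← e3, ← eadd, ← eadd, add_comm]
  have exi : ∀ i, e i * X * e i = X := fun i => hpow _
  let F : QuaternionGroup 3 → G := fun q => match q with
    | .a i => e i
    | .xa i => X * e i
  refine ⟨MonoidHom.mk' F ?_, e1, ?_⟩
  · rintro (i | i) (j | j)
    · exact eadd i j
    · change X * e (j - i) = e i * (X * e j)
      rw [esub, ← mul_assoc, ← mul_assoc, ex]
    · change X * e (i + j) = X * e i * e j
      rw [eadd, mul_assoc]
    · change e (3 + j - i) = X * e i * (X * e j)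
      rw [add_sub_assoc, eadd, e3, esub, mul_assoc X (e i), ← mul_assoc (e i), ex]
      simp only [mul_assoc]
  · change X * e 0 = X
    rw [e0, mul_one]

/-- the group presented by ⟨a, x | a⁶ = 1, x² = a³, axa = x⟩ is
isomorphic to the dicyclic group Dic₃ of order 12. -/
theorem presentedGroup_iso_dicyclic :
    Nonempty (PresentedGroup dicRels ≃* QuaternionGroup 3) := by
  let f0 : DicGen → QuaternionGroup 3 := fun d => match d with
    | .a => .a 1
    | .x => .xa 0
  have hf : ∀ r ∈ dicRels, FreeGroup.lift f0 r = 1 := by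
    rintro r (rfl | rfl | rfl) <;> simp only [map_mul, map_pow, map_inv, FreeGroup.lift_apply_of]
      <;> decide
  let f : PresentedGroup dicRels →* QuaternionGroup 3 := PresentedGroup.toGroup hf
  let A : PresentedGroup dicRels := PresentedGroup.of DicGen.a
  let X : PresentedGroup dicRels := PresentedGroup.of DicGen.x
  have h6 : A ^ 6 = 1 :=
    PresentedGroup.one_of_mem (rels := dicRels) (Or.inl rfl)
  have h2 : X ^ 2 = A ^ 3 :=
    mul_inv_eq_one.mp (PresentedGroup.one_of_mem (rels := dicRels) (Or.inr (Or.inl rfl)))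
  have hx : A * X * A = X :=
    mul_inv_eq_one.mp (PresentedGroup.one_of_mem (rels := dicRels) (Or.inr (Or.inr rfl)))
  obtain ⟨g, ga, gx⟩ := dic_hom_aux A X h6 h2 hx
  have fA : f A = .a 1 := PresentedGroup.toGroup.of hf
  have fX : f X = .xa 0 := PresentedGroup.toGroup.of hf
  refine ⟨MonoidHom.toMulEquiv f g ?_ ?_⟩
  · apply PresentedGroup.ext
    rintro (_ | _)
    · change g (f A) = A
      rw [fA, ga]
    · change g (f X) = X
      rw [fX, gx]
  · have key : ∀ i : ZMod (2 * 3), f (g (.a i)) = .a i := by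
      intro i
      have : (QuaternionGroup.a i : QuaternionGroup 3) = (.a 1) ^ i.val := by
        rw [QuaternionGroup.a_one_pow, ZMod.natCast_zmod_val]
      rw [this, map_pow, map_pow, ga, fA]
    ext q
    change f (g q) = q
    rcases q with i | i
    · exact key i
    · have : (QuaternionGroup.xa i : QuaternionGroup 3) = .xa 0 * .a i := by simp
      rw [this, map_mul, map_mul, key, gx, fX]
end

section
/- For τ in the complex upper half-plane, p = e^{πiτ} and ω = e^{2πi/3}: θ(pω;p²) = e^{πiτ/12}·φ3(τ)/φ5(τ), θ(−ω;p²) = −ω²e^{−πiτ/6}·φ4(τ)/φ5(τ), θ(ω;p²) = (1−ω)e^{−πiτ/6}·φ5(τ), and θ(−pω;p²) = e^{πiτ/12}·φ5(τ)²/(φ3(τ)φ4(τ)). -/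
open Complex

/-- The theta product θ(x;p) = ∏_{j≥0} (1 - pʲx)(1 - pʲ⁺¹x⁻¹). -/
noncomputable def jtheta (x p : ℂ) : ℂ :=
  ∏' j : ℕ, ((1 - p ^ j * x) * (1 - p ^ (j + 1) * x⁻¹))

/-- Dedekind's eta function η(τ) = e^{πiτ/12} ∏_{j≥1} (1 - e^{2πijτ}). -/
noncomputable def dedekindEta (τ : ℂ) : ℂ :=
  Complex.exp ((Real.pi : ℂ) * Complex.I * τ / 12) *
    ∏' j : ℕ, (1 - Complex.exp (2 * (Real.pi : ℂ) * Complex.I * (j + 1) * τ))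

/-- The eta quotient φ₁ = η(τ/2)²/η(τ)². -/
noncomputable def phi1 (τ : ℂ) : ℂ := dedekindEta (τ / 2) ^ 2 / dedekindEta τ ^ 2

/-- The eta quotient φ₂ = η(2τ)²/η(τ)². -/
noncomputable def phi2 (τ : ℂ) : ℂ := dedekindEta (2 * τ) ^ 2 / dedekindEta τ ^ 2

/-- The eta quotient φ₃ = η(3τ/2)/η(τ/2). -/
noncomputable def phi3 (τ : ℂ) : ℂ := dedekindEta (3 * τ / 2) / dedekindEta (τ / 2)

/-- The eta quotient φ₄ = η(6τ)/η(2τ). -/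
noncomputable def phi4 (τ : ℂ) : ℂ := dedekindEta (6 * τ) / dedekindEta (2 * τ)

/-- The eta quotient φ₅ = η(3τ)/η(τ). -/
noncomputable def phi5 (τ : ℂ) : ℂ := dedekindEta (3 * τ) / dedekindEta τ

noncomputable def SS (c x : ℂ) : ℂ := ∏' n : ℕ, (1 - c * x ^ (n + 1))
noncomputable def OO (c x : ℂ) : ℂ := ∏' n : ℕ, (1 - c * x ^ (2 * n + 1))

lemma summ_aux (c d : ℂ) {x : ℂ} (hx : ‖x‖ < 1) : Summable fun n : ℕ => ‖-(c * (d * x ^ n))‖ := by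
  have := (((summable_geometric_of_lt_one (norm_nonneg _) hx).mul_left ‖d‖).mul_left ‖c‖)
  simpa using this

lemma mult0 (c d : ℂ) {x : ℂ} (hx : ‖x‖ < 1) : Multipliable fun n : ℕ => 1 - c * (d * x ^ n) := by
  simpa [sub_eq_add_neg] using multipliable_one_add_of_summable (summ_aux c d hx)

lemma multS (c : ℂ) {x : ℂ} (hx : ‖x‖ < 1) : Multipliable fun n : ℕ => 1 - c * x ^ (n + 1) := by
  simpa [pow_succ, mul_comm x] using mult0 c x hx

lemma sq_lt {x : ℂ} (hx : ‖x‖ < 1) {k : ℕ} (hk : k ≠ 0) : ‖x ^ k‖ < 1 := by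
  rw [norm_pow]; exact pow_lt_one₀ (norm_nonneg _) hx hk

lemma multO (c : ℂ) {x : ℂ} (hx : ‖x‖ < 1) :
    Multipliable fun n : ℕ => 1 - c * x ^ (2 * n + 1) := by
  have := mult0 c x (sq_lt hx two_ne_zero)
  refine this.congr fun n => ?_
  ring

lemma SS_ne (c : ℂ) (hc : ‖c‖ = 1) {x : ℂ} (hx : ‖x‖ < 1) : SS c x ≠ 0 := by
  have := tprod_one_add_ne_zero_of_summable (f := fun n : ℕ => -(c * (x * x ^ n))) (fun n h => ?_)
    (summ_aux c x hx)
  · simpa [SS, sub_eq_add_neg, pow_succ, mul_comm x] using this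
  · have h1 : c * x ^ (n + 1) = 1 := by linear_combination -h
    have h2 := congrArg norm h1
    rw [norm_mul, hc, one_mul, norm_one] at h2
    exact (sq_lt hx n.succ_ne_zero).ne h2

lemma SS_neg (c : ℂ) {x : ℂ} (hx : ‖x‖ < 1) : SS c x * SS (-c) x = SS (c ^ 2) (x ^ 2) := by
  unfold SS
  rw [← (multS c hx).tprod_mul (multS (-c) hx)]
  refine tprod_congr fun n => ?_
  ring

lemma SS_cube (ω : ℂ) (h : 1 + ω + ω ^ 2 = 0) {x : ℂ} (hx : ‖x‖ < 1) :
    SS 1 x * (SS ω x * SS (ω ^ 2) x) = SS 1 (x ^ 3) := by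
  unfold SS
  rw [← (multS ω hx).tprod_mul (multS (ω ^ 2) hx),
    ← (multS 1 hx).tprod_mul ((multS ω hx).mul (multS (ω ^ 2) hx))]
  refine tprod_congr fun n => ?_
  rw [← pow_mul, mul_comm 3, pow_mul]
  generalize x ^ (n + 1) = y
  have h3 : ω ^ 3 = 1 := by linear_combination (ω - 1) * h
  linear_combination (-y + y ^ 2) * h - y ^ 3 * h3 + (y ^ 2 * (ω - 1)) * h

lemma SS_odd (c : ℂ) {x : ℂ} (hx : ‖x‖ < 1) : SS c x = OO c x * SS c (x ^ 2) := by
  have h := tprod_even_mul_odd (f := fun n : ℕ => 1 - c * x ^ (n + 1)) (multO c hx)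
    ((multS c (sq_lt hx two_ne_zero)).congr fun n => by ring)
  unfold SS OO
  rw [← h]
  congr 1
  refine tprod_congr fun n => ?_
  ring

lemma SS_zero (c : ℂ) {x : ℂ} (hx : ‖x‖ < 1) : ∏' n : ℕ, (1 - c * x ^ n) = (1 - c) * SS c x := by
  rw [tprod_eq_zero_mul' (f := fun n : ℕ => 1 - c * x ^ n) (multS c hx)]
  simp [SS]

lemma jt0 (c : ℂ) {x : ℂ} (hx : ‖x‖ < 1) : jtheta c x = (1 - c) * (SS c x * SS c⁻¹ x) := by
  have m0 : Multipliable fun n : ℕ => 1 - c * x ^ n := by simpa using mult0 c 1 hx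
  rw [← mul_assoc, ← SS_zero c hx, SS, ← m0.tprod_mul (multS c⁻¹ hx)]
  refine tprod_congr fun n => ?_
  ring

lemma jt1 (c : ℂ) {x : ℂ} (hx : ‖x‖ < 1) (h0 : x ≠ 0) :
    jtheta (x * c) (x ^ 2) = OO c x * OO c⁻¹ x := by
  unfold OO
  rw [← (multO c hx).tprod_mul (multO c⁻¹ hx)]
  refine tprod_congr fun n => ?_
  rw [mul_inv]
  congr 1
  · ring
  · congr 1
    field_simp
    ring

lemma eta_eq (τ : ℂ) (t p : ℂ) (k : ℕ) (hp : p = Complex.exp ((Real.pi : ℂ) * Complex.I * τ))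
    (ht : 2 * t = k * τ) :
    dedekindEta t = Complex.exp ((Real.pi : ℂ) * Complex.I * τ / 24) ^ k * SS 1 (p ^ k) := by
  unfold dedekindEta SS
  congr 1
  · rw [← Complex.exp_nat_mul]; congr 1
    linear_combination (Real.pi : ℂ) * Complex.I / 24 * ht
  · refine tprod_congr fun n => ?_
    rw [hp, ← Complex.exp_nat_mul, ← Complex.exp_nat_mul, one_mul]; congr 2
    push_cast
    linear_combination (Real.pi : ℂ) * Complex.I * (n + 1) * ht

/-- theta values at cube roots of unity in terms of φ₃, φ₄, φ₅. -/
theorem theta_eq_eta_quotients_2 (τ : ℂ) (hτ : 0 < τ.im)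
    (p ω : ℂ) (hp : p = Complex.exp ((Real.pi : ℂ) * Complex.I * τ))
    (hω : ω = Complex.exp (2 * (Real.pi : ℂ) * Complex.I / 3)) :
    jtheta (p * ω) (p ^ 2)
      = Complex.exp ((Real.pi : ℂ) * Complex.I * τ / 12) * phi3 τ / phi5 τ ∧
    jtheta (-ω) (p ^ 2)
      = -ω ^ 2 * Complex.exp (-((Real.pi : ℂ) * Complex.I * τ) / 6) * phi4 τ / phi5 τ ∧
    jtheta ω (p ^ 2)
      = (1 - ω) * Complex.exp (-((Real.pi : ℂ) * Complex.I * τ) / 6) * phi5 τ ∧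
    jtheta (-(p * ω)) (p ^ 2)
      = Complex.exp ((Real.pi : ℂ) * Complex.I * τ / 12) * phi5 τ ^ 2 / (phi3 τ * phi4 τ) := by
  have hx : ‖p‖ < 1 := by
    rw [hp, Complex.norm_exp, Real.exp_lt_one_iff]
    simp
    positivity
  have h0 : p ≠ 0 := by rw [hp]; exact Complex.exp_ne_zero _
  have hprim : IsPrimitiveRoot ω 3 := by
    rw [hω]; exact_mod_cast Complex.isPrimitiveRoot_exp 3 (by norm_num)
  have h3 : ω ^ 3 = 1 := hprim.pow_eq_one
  have hs : 1 + ω + ω ^ 2 = 0 := by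
    have h1 : ω ≠ 1 := hprim.ne_one (by norm_num)
    apply mul_left_cancel₀ (sub_ne_zero.2 h1)
    linear_combination h3
  have hinv : ω⁻¹ = ω ^ 2 := by
    rw [inv_eq_iff_eq_inv]
    refine eq_inv_of_mul_eq_one_left ?_
    linear_combination h3
  have hinv' : (-ω)⁻¹ = -ω ^ 2 := by rw [inv_neg, hinv]
  have n1 : ‖ω‖ = 1 := hprim.norm'_eq_one (by norm_num)
  have n2 : ‖ω ^ 2‖ = 1 := by simp [n1]
  have hq : ‖p ^ 2‖ < 1 := sq_lt hx (by norm_num)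
  have hq4 : ‖p ^ 4‖ < 1 := sq_lt hx (by norm_num)
  have e4 : (p ^ 2) ^ 2 = p ^ 4 := by ring
  have ew : (ω ^ 2) ^ 2 = ω := by linear_combination ω * h3
  -- relations
  have c1 := SS_cube ω hs hx
  have c2 := SS_cube ω hs hq
  have c4 := SS_cube ω hs hq4
  rw [← pow_mul] at c2 c4
  norm_num at c2 c4
  have g1 := SS_neg ω hx
  have g1' := SS_neg (ω ^ 2) hx
  have g2 := SS_neg ω hq
  have g2' := SS_neg (ω ^ 2) hq
  rw [ew] at g1' g2'
  rw [e4] at g2 g2'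
  have o1 := SS_odd ω hx
  have o1' := SS_odd (ω ^ 2) hx
  have o2 := SS_odd (-ω) hx
  have o2' := SS_odd (-ω ^ 2) hx
  have k1 := eta_eq τ (τ / 2) p 1 hp (by push_cast; ring)
  have k2 := eta_eq τ τ p 2 hp (by push_cast; ring)
  have k3 := eta_eq τ (3 * τ / 2) p 3 hp (by push_cast; ring)
  have k4 := eta_eq τ (2 * τ) p 4 hp (by push_cast; ring)
  have k6 := eta_eq τ (3 * τ) p 6 hp (by push_cast; ring)
  have k12 := eta_eq τ (6 * τ) p 12 hp (by push_cast; ring)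
  rw [pow_one, pow_one] at k1
  have x1 : Complex.exp ((Real.pi : ℂ) * Complex.I * τ / 12) =
      Complex.exp ((Real.pi : ℂ) * Complex.I * τ / 24) ^ 2 := by
    rw [← Complex.exp_nat_mul]; congr 1; push_cast; ring
  have x2 : Complex.exp (-((Real.pi : ℂ) * Complex.I * τ) / 6) =
      (Complex.exp ((Real.pi : ℂ) * Complex.I * τ / 24) ^ 4)⁻¹ := by
    rw [← Complex.exp_nat_mul, ← Complex.exp_neg]; congr 1; push_cast; ring
  have hr := Complex.exp_ne_zero ((Real.pi : ℂ) * Complex.I * τ / 24)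
  rw [← mul_neg p ω, jt1 _ hx h0, jt1 _ hx h0, jt0 _ hq, jt0 _ hq, hinv, hinv', x1, x2,
    phi3, phi4, phi5, k1, k2, k3, k4, k6, k12]
  generalize Complex.exp ((Real.pi : ℂ) * Complex.I * τ / 24) = r at *
  have z1 := SS_ne 1 (by simp) hx
  have z2 := SS_ne 1 (by simp) hq
  have z4 := SS_ne 1 (by simp) hq4
  have a1 := SS_ne ω n1 hx
  have a2 := SS_ne ω n1 hq
  have a4 := SS_ne ω n1 hq4
  have b1 := SS_ne (ω ^ 2) n2 hx
  have b2 := SS_ne (ω ^ 2) n2 hq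
  have b4 := SS_ne (ω ^ 2) n2 hq4
  have s2 := SS_ne (-ω) (by simpa using n1) hq
  have s2' := SS_ne (-ω ^ 2) (by rw [norm_neg]; exact n2) hq
  rw [← c1, ← c2, ← c4]
  have hw : 1 - -ω = - ω ^ 2 := by linear_combination hs
  rw [hw]
  replace o1 := eq_div_of_mul_eq a2 o1.symm
  replace o1' := eq_div_of_mul_eq b2 o1'.symm
  replace o2 := eq_div_of_mul_eq s2 o2.symm
  replace o2' := eq_div_of_mul_eq s2' o2'.symm
  replace g1 := eq_div_of_mul_eq a1 ((mul_comm _ _).trans g1)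
  replace g1' := eq_div_of_mul_eq b1 ((mul_comm _ _).trans g1')
  replace g2 := eq_div_of_mul_eq a2 ((mul_comm _ _).trans g2)
  replace g2' := eq_div_of_mul_eq b2 ((mul_comm _ _).trans g2')
  rw [o1, o1', o2, o2', g1, g1', g2, g2']
  refine ⟨?_, ?_, ?_, ?_⟩
  · field_simp
  · field_simp
  · field_simp
  · field_simp
end

section
/- Let U(τ) = (τ−1)/(3τ−2) and X = √(−i(3τ−2)) (principal branch). Then for all τ in the complex upper half-plane: η(U(τ)/2) = e^{−7πi/24}·X·η(τ)³/(η(τ/2)η(2τ)), η(U(τ)) = e^{−πi/12}·X·η(τ), η(3U(τ)/2) = e^{−πi/24}·X·η(3τ)³/(η(3τ/2)η(6τ)), η(2U(τ)) = e^{πi/12}·(X/√2)·η(τ/2), η(3U(τ)) = e^{−πi/12}·X·η(3τ), and η(6U(τ)) = e^{πi/12}·(X/√2)·η(3τ/2). -/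
open Complex

theorem de_eq (z : ℂ) : dedekindEta z = ModularForm.eta z := by
  unfold dedekindEta ModularForm.eta
  simp only [ModularForm.eta_q_eq_cexp, Function.Periodic.qParam]
  congr 2
  push_cast
  ring

theorem de_ne {z : ℂ} (hz : 0 < z.im) : dedekindEta z ≠ 0 := by
  rw [de_eq]; exact ModularForm.eta_ne_zero hz

theorem de_T (z : ℂ) : dedekindEta (z + 1) = Complex.exp (Real.pi * I / 12) * dedekindEta z := by
  unfold dedekindEta
  have h : ∀ j : ℕ, Complex.exp (2 * (Real.pi : ℂ) * Complex.I * (j + 1) * (z + 1))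
     = Complex.exp (2 * (Real.pi : ℂ) * Complex.I * (j + 1) * z) := by
    intro j
    rw [Complex.exp_eq_exp_iff_exists_int]
    exact ⟨j + 1, by push_cast; ring⟩
  simp only [h]
  rw [← mul_assoc, ← Complex.exp_add]
  congr 2
  ring

theorem de_Tn (n : ℕ) (z : ℂ) :
    dedekindEta (z + n) = Complex.exp (n * (Real.pi * I / 12)) * dedekindEta z := by
  induction n with
  | zero => simp
  | succ k ih =>
    have : z + ((k + 1 : ℕ) : ℂ) = (z + k) + 1 := by push_cast; ring
    rw [this, de_T, ih, ← mul_assoc, ← Complex.exp_add]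
    congr 2
    push_cast; ring

theorem de_Tn' (n : ℕ) (z : ℂ) :
    dedekindEta (z - n) = Complex.exp (-(n * (Real.pi * I / 12))) * dedekindEta z := by
  have := de_Tn n (z - n)
  rw [sub_add_cancel] at this
  rw [this, ← mul_assoc, ← Complex.exp_add]
  simp

theorem sq_inj {a b : ℂ} (h : a ^ 2 = b ^ 2) (ha : 0 < a.re) (hb : 0 < b.re) : a = b := by
  rcases sq_eq_sq_iff_eq_or_eq_neg.1 h with h | h
  · exact h
  · rw [h, neg_re] at ha
    linarith

/-- principal root of -i z -/
noncomputable def rt (z : ℂ) : ℂ := (-I * z) ^ ((1 : ℂ) / 2)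

theorem rt_sq (z : ℂ) : rt z ^ 2 = -I * z := by
  unfold rt
  rw [one_div]
  exact Complex.cpow_nat_inv_pow _ two_ne_zero

theorem rt_ne {z : ℂ} (hz : 0 < z.im) : rt z ≠ 0 := by
  intro h
  have := rt_sq z
  rw [h] at this
  have h0 : z = 0 := by simpa using this.symm
  simp [h0] at hz

/-- the root lies in the sector |arg| < π/4 -/
theorem rt_arg {z : ℂ} (hz : 0 < z.im) : 0 < (rt z).re ∧ |(rt z).im| < (rt z).re := by
  have h0 : -I * z ≠ 0 := by
    intro h
    have h0 : z = 0 := by simpa using h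
    simp [h0] at hz
  have hre : 0 < (rt z).re := by
    unfold rt
    rw [Complex.cpow_def_of_ne_zero h0, Complex.exp_re]
    refine mul_pos (Real.exp_pos _) (Real.cos_pos_of_mem_Ioo ?_)
    have h1 : |(-I * z).arg| < Real.pi / 2 := by
      rw [Complex.abs_arg_lt_pi_div_two_iff]
      left; simpa using hz
    rw [abs_lt] at h1
    have : (Complex.log (-I * z) * (1 / 2)).im = (-I * z).arg / 2 := by
      have : (1 / 2 : ℂ) = ((1 / 2 : ℝ) : ℂ) := by push_cast; rfl
      rw [this, Complex.im_mul_ofReal, Complex.log_im]; ring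
    rw [this]
    constructor <;> linarith [Real.pi_pos]
  refine ⟨hre, ?_⟩
  have h2 := congrArg Complex.re (rt_sq z)
  simp [sq] at h2
  apply abs_lt_of_sq_lt_sq _ hre.le
  nlinarith

theorem mul_re_pos {a b : ℂ} (ha : 0 < a.re ∧ |a.im| < a.re) (hb : 0 < b.re ∧ |b.im| < b.re) :
    0 < (a * b).re := by
  rw [mul_re]
  have : |a.im * b.im| < a.re * b.re := by
    rw [abs_mul]
    exact mul_lt_mul'' ha.2 hb.2 (abs_nonneg _) (abs_nonneg _)
  linarith [(abs_lt.1 this).2]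

theorem e4_re : Complex.exp (Real.pi * I / 4) = (Real.sqrt 2 / 2 : ℝ) + (Real.sqrt 2 / 2 : ℝ) * I := by
  rw [show (Real.pi * I / 4 : ℂ) = ((Real.pi / 4 : ℝ) : ℂ) * I by push_cast; ring,
    Complex.exp_mul_I, ← Complex.ofReal_cos, ← Complex.ofReal_sin, Real.cos_pi_div_four,
    Real.sin_pi_div_four]

theorem e4_re' : Complex.exp (-(Real.pi * I / 4)) =
    (Real.sqrt 2 / 2 : ℝ) - (Real.sqrt 2 / 2 : ℝ) * I := by
  rw [show (-(Real.pi * I / 4) : ℂ) = ((-(Real.pi / 4) : ℝ) : ℂ) * I by push_cast; ring,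
    Complex.exp_mul_I, ← Complex.ofReal_cos, ← Complex.ofReal_sin, Real.cos_neg, Real.sin_neg,
    Real.cos_pi_div_four, Real.sin_pi_div_four]
  push_cast; ring

theorem rt_mul1 {a b : ℂ} (ha : 0 < a.im) (hb : 0 < b.im) (hc : 0 < (-(a * b)).im) :
    rt a * rt b = Complex.exp (Real.pi * I / 4) * rt (-(a * b)) := by
  apply sq_inj
  · rw [mul_pow, mul_pow, rt_sq, rt_sq, rt_sq, ← Complex.exp_nat_mul,
      show ((2 : ℕ) : ℂ) * (Real.pi * I / 4) = Real.pi / 2 * I by push_cast; ring,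
      Complex.exp_pi_div_two_mul_I]
    ring
  · exact mul_re_pos (rt_arg ha) (rt_arg hb)
  · obtain ⟨h1, h2⟩ := rt_arg hc
    have h3 := (abs_lt.1 h2).2
    rw [e4_re]
    simp
    have : 0 < Real.sqrt 2 := by positivity
    nlinarith

theorem rt_mul2 {a b : ℂ} (ha : 0 < a.im) (hb : 0 < b.im) (hc : 0 < (a * b).im) :
    rt a * rt b = Complex.exp (-(Real.pi * I / 4)) * rt (a * b) := by
  apply sq_inj
  · rw [mul_pow, mul_pow, rt_sq, rt_sq, rt_sq, ← Complex.exp_nat_mul,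
      show ((2 : ℕ) : ℂ) * (-(Real.pi * I / 4)) = -(Real.pi / 2 * I) by push_cast; ring,
      Complex.exp_neg, Complex.exp_pi_div_two_mul_I, Complex.inv_I]
    ring
  · exact mul_re_pos (rt_arg ha) (rt_arg hb)
  · obtain ⟨h1, h2⟩ := rt_arg hc
    have h3 := (abs_lt.1 h2).1
    rw [e4_re']
    simp
    have : 0 < Real.sqrt 2 := by positivity
    nlinarith

theorem rt_scale {r : ℝ} (hr : 0 < r) {z : ℂ} (hz : 0 < z.im) :
    rt (r * z) = Real.sqrt r * rt z := by
  have hz' : 0 < ((r : ℂ) * z).im := by simp; positivity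
  apply sq_inj
  · rw [mul_pow, rt_sq, rt_sq, ← Complex.ofReal_pow, Real.sq_sqrt hr.le]; ring
  · exact (rt_arg hz').1
  · rw [Complex.re_ofReal_mul]
    exact mul_pos (Real.sqrt_pos.2 hr) (rt_arg hz).1

theorem de_S {z : ℂ} (hz : 0 < z.im) : dedekindEta (-1 / z) = rt z * dedekindEta z := by
  have h := ModularForm.eta_comp_eq_csqrt_I_inv hz
  simp only [Function.comp, Pi.smul_apply, Pi.mul_apply, smul_eq_mul] at h
  rw [de_eq, de_eq, h, ← mul_assoc]
  congr 1
  have hz0 : z ≠ 0 := by rintro rfl; simp at hz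
  have h0 : -I * z ≠ 0 := mul_ne_zero (neg_ne_zero.2 I_ne_zero) hz0
  have hI : sqrt I ≠ 0 := by simp [sqrt]
  have h1 : |(-I * z).arg| < Real.pi / 2 := by
    rw [Complex.abs_arg_lt_pi_div_two_iff]
    left; simpa using hz
  rw [abs_lt] at h1
  have hl : Complex.log (I * (-I * z)) = Complex.log I + Complex.log (-I * z) := by
    refine Complex.log_mul I_ne_zero h0 ?_
    rw [Complex.arg_I]
    constructor <;> linarith [Real.pi_pos]
  have hz1 : I * (-I * z) = z := by
    rw [← mul_assoc, mul_neg, I_mul_I]; ring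
  rw [hz1] at hl
  rw [inv_mul_eq_iff_eq_mul₀ hI]
  unfold sqrt rt
  rw [Complex.cpow_def_of_ne_zero hz0, Complex.cpow_def_of_ne_zero h0,
    Complex.cpow_def_of_ne_zero I_ne_zero, ← Complex.exp_add, hl]
  congr 1
  ring

theorem rt_half {z : ℂ} (hz : 0 < z.im) : rt (z / 2) = rt z / (Real.sqrt 2 : ℂ) := by
  have hz2 : 0 < (z / 2).im := by simpa using hz
  have h := rt_scale (r := 2) two_pos hz2
  have e : ((2 : ℝ) : ℂ) * (z / 2) = z := by push_cast; ring
  rw [e] at h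
  have : (Real.sqrt 2 : ℂ) ≠ 0 := by simp
  rw [h]; field_simp

theorem inv_im_pos {z : ℂ} (hz : 0 < z.im) : 0 < (-1 / z).im := by
  have hz0 : z ≠ 0 := by rintro rfl; simp at hz
  rw [neg_div, neg_im, one_div, inv_im, neg_div, neg_neg]
  exact div_pos hz (normSq_pos.2 hz0)

theorem f_half {q : ℂ} (hq : ‖q‖ < 1) :
    (∏' j : ℕ, (1 - (-q) ^ (j + 1))) * ((∏' j : ℕ, (1 - q ^ (j + 1))) *
      ∏' j : ℕ, (1 - (q ^ 4) ^ (j + 1))) = (∏' j : ℕ, (1 - (q ^ 2) ^ (j + 1))) ^ 3 := by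
  have mo : ∀ q : ℂ, ‖q‖ < 1 → Multipliable fun k : ℕ => 1 - q ^ (2 * k + 1) := by
    intro q hq
    have : Summable fun k : ℕ => ‖-q ^ (2 * k + 1)‖ := by
      have h := (summable_geometric_of_lt_one (norm_nonneg q) hq).comp_injective
        (i := fun k : ℕ => 2 * k + 1) (fun a b h => by simpa using h)
      simpa [Function.comp_def] using h
    simpa [sub_eq_add_neg] using multipliable_one_add_of_summable this
  have me : ∀ q : ℂ, ‖q‖ < 1 → Multipliable fun k : ℕ => 1 - q ^ (2 * k + 1 + 1) := by
    intro q hq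
    have : Summable fun k : ℕ => ‖-q ^ (2 * k + 1 + 1)‖ := by
      have h := (summable_geometric_of_lt_one (norm_nonneg q) hq).comp_injective
        (i := fun k : ℕ => 2 * k + 1 + 1) (fun a b h => by simpa using h)
      simpa [Function.comp_def] using h
    simpa [sub_eq_add_neg] using multipliable_one_add_of_summable this
  have hs : ∀ q : ℂ, ‖q‖ < 1 → ∏' j : ℕ, (1 - q ^ (j + 1)) =
      (∏' k : ℕ, (1 - q ^ (2 * k + 1))) * ∏' j : ℕ, (1 - (q ^ 2) ^ (j + 1)) := by
    intro q hq
    rw [← tprod_even_mul_odd (f := fun j : ℕ => 1 - q ^ (j + 1)) (mo q hq) (me q hq)]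
    congr 1
    refine tprod_congr fun k => ?_
    rw [← pow_mul]; ring_nf
  have hg : (∏' k : ℕ, (1 - q ^ (2 * k + 1))) * (∏' k : ℕ, (1 - (-q) ^ (2 * k + 1))) =
      ∏' k : ℕ, (1 - (q ^ 2) ^ (2 * k + 1)) := by
    rw [← Multipliable.tprod_mul (mo q hq) (mo (-q) (by simpa using hq))]
    refine tprod_congr fun k => ?_
    rw [Odd.neg_pow ⟨k, rfl⟩, ← pow_mul]; ring
  have h2 : ‖q ^ 2‖ < 1 := by
    rw [norm_pow]; exact pow_lt_one₀ (norm_nonneg _) hq two_ne_zero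
  have e1 := hs q hq
  have e2 := hs (-q) (by simpa using hq)
  have e3 := hs (q ^ 2) h2
  rw [neg_sq] at e2
  rw [show (q ^ 2) ^ 2 = q ^ 4 by ring] at e3
  rw [← hg] at e3
  rw [e1, e2]
  linear_combination (-(∏' j : ℕ, (1 - (q ^ 2) ^ (j + 1))) ^ 2) * e3

theorem de_half {z : ℂ} (hz : 0 < z.im) : dedekindEta (z + 1 / 2) =
    Complex.exp (Real.pi * I / 24) * dedekindEta (2 * z) ^ 3 /
      (dedekindEta z * dedekindEta (4 * z)) := by
  rw [eq_div_iff (mul_ne_zero (de_ne hz) (de_ne (by simpa using hz)))]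
  have hq : ‖Complex.exp (2 * Real.pi * I * z)‖ < 1 := by
    rw [Complex.norm_exp]
    simp
    positivity
  have key : ∀ w c : ℂ, Complex.exp (2 * Real.pi * I * w) = c →
     dedekindEta w = Complex.exp ((Real.pi : ℂ) * I * w / 12) * ∏' j : ℕ, (1 - c ^ (j + 1)) := by
    rintro w c rfl
    unfold dedekindEta
    congr 1
    refine tprod_congr fun j => ?_
    rw [← Complex.exp_nat_mul]
    congr 2; push_cast; ring
  have f := f_half hq
  rw [key (z + 1 / 2) (-Complex.exp (2 * Real.pi * I * z)) ?_, key z _ rfl,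
    key (2 * z) (Complex.exp (2 * Real.pi * I * z) ^ 2) ?_,
    key (4 * z) (Complex.exp (2 * Real.pi * I * z) ^ 4) ?_, mul_pow, ← f]
  · have : Complex.exp ((Real.pi : ℂ) * I * (z + 1 / 2) / 12) *
       (Complex.exp ((Real.pi : ℂ) * I * z / 12) * Complex.exp ((Real.pi : ℂ) * I * (4 * z) / 12))
       = Complex.exp (Real.pi * I / 24) * Complex.exp ((Real.pi : ℂ) * I * (2 * z) / 12) ^ 3 := by
      rw [← Complex.exp_nat_mul, ← Complex.exp_add, ← Complex.exp_add, ← Complex.exp_add]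
      congr 1; push_cast; ring
    rw [← mul_assoc (Complex.exp (Real.pi * I / 24)), ← this]
    ring
  · rw [← Complex.exp_nat_mul]; congr 1; push_cast; ring
  · rw [← Complex.exp_nat_mul]; congr 1; push_cast; ring
  · rw [show 2 * Real.pi * I * (z + 1 / 2) = 2 * Real.pi * I * z + Real.pi * I by ring,
      Complex.exp_add, Complex.exp_pi_mul_I]; ring

/-- transformation of eta under U(τ) = (τ-1)/(3τ-2),
with X = √(-i(3τ-2)) the principal branch. -/
theorem eta_transformation_under_U (τ : ℂ) (hτ : 0 < τ.im)
    (X : ℂ) (hX : X = (-Complex.I * (3 * τ - 2)) ^ ((1 : ℂ) / 2)) :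
    dedekindEta ((τ - 1) / (3 * τ - 2) / 2)
      = Complex.exp (-7 * (Real.pi : ℂ) * Complex.I / 24) * X * dedekindEta τ ^ 3
          / (dedekindEta (τ / 2) * dedekindEta (2 * τ)) ∧
    dedekindEta ((τ - 1) / (3 * τ - 2))
      = Complex.exp (-(Real.pi : ℂ) * Complex.I / 12) * X * dedekindEta τ ∧
    dedekindEta (3 * ((τ - 1) / (3 * τ - 2)) / 2)
      = Complex.exp (-(Real.pi : ℂ) * Complex.I / 24) * X * dedekindEta (3 * τ) ^ 3
          / (dedekindEta (3 * τ / 2) * dedekindEta (6 * τ)) ∧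
    dedekindEta (2 * ((τ - 1) / (3 * τ - 2)))
      = Complex.exp ((Real.pi : ℂ) * Complex.I / 12) * (X / (Real.sqrt 2 : ℂ))
          * dedekindEta (τ / 2) ∧
    dedekindEta (3 * ((τ - 1) / (3 * τ - 2)))
      = Complex.exp (-(Real.pi : ℂ) * Complex.I / 12) * X * dedekindEta (3 * τ) ∧
    dedekindEta (6 * ((τ - 1) / (3 * τ - 2)))
      = Complex.exp ((Real.pi : ℂ) * Complex.I / 12) * (X / (Real.sqrt 2 : ℂ))
          * dedekindEta (3 * τ / 2) := by
  have hw : 0 < (3 * τ - 2).im := by simpa using hτ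
  have hX' : X = rt (3 * τ - 2) := hX
  have hv : 0 < (τ - 1).im := by simpa using hτ
  have hw0 : 3 * τ - 2 ≠ 0 := by intro h; simp [h] at hw
  have hv0 : τ - 1 ≠ 0 := by intro h; simp [h] at hv
  have hτ0 : τ ≠ 0 := by rintro rfl; simp at hτ
  have hX0 : X ≠ 0 := hX' ▸ rt_ne hw
  have h2 : (Real.sqrt 2 : ℂ) ≠ 0 := by simp
  clear hX
  refine ⟨?_, ?_, ?_, ?_, ?_, ?_⟩
  · have hv2 : 0 < ((τ - 1) / 2).im := by simpa using hv
    have hs : 0 < (-1 / ((τ - 1) / 2) - (6 : ℕ)).im := by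
      have := inv_im_pos hv2
      rw [sub_im, natCast_im]; linarith
    have e1 : (τ - 1) / (3 * τ - 2) / 2 = -1 / (-1 / ((τ - 1) / 2) - (6 : ℕ)) := by
      have : -1 / ((τ - 1) / 2) - ((6 : ℕ) : ℂ) = -(2 * (3 * τ - 2)) / (τ - 1) := by
        push_cast; field_simp; ring
      rw [this]; field_simp
    have e2 : -((-1 / ((τ - 1) / 2) - ((6 : ℕ) : ℂ)) * ((τ - 1) / 2)) = 3 * τ - 2 := by
      push_cast; field_simp; ring
    have m := rt_mul1 hs hv2 (by rw [e2]; exact hw)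
    rw [e2, ← hX'] at m
    have e3 : (τ - 1) / 2 = (τ / 2 + 1 / 2) - (1 : ℕ) := by push_cast; ring
    have hh := de_half (z := τ / 2) (by simpa using hτ)
    rw [show 2 * (τ / 2) = τ by ring, show 4 * (τ / 2) = 2 * τ by ring] at hh
    have e4 : dedekindEta ((τ - 1) / 2) = Complex.exp (-((1 : ℕ) * (Real.pi * I / 12))) *
        (Complex.exp (Real.pi * I / 24) * dedekindEta τ ^ 3 /
          (dedekindEta (τ / 2) * dedekindEta (2 * τ))) := by rw [e3, de_Tn', hh]
    rw [e1, de_S hs, de_Tn', de_S hv2, e4]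
    have ee : Complex.exp (-7 * (Real.pi : ℂ) * I / 24) = Complex.exp (Real.pi * I / 4) *
        Complex.exp (-((6 : ℕ) * (Real.pi * I / 12))) * Complex.exp (-((1 : ℕ) * (Real.pi * I / 12)))
        * Complex.exp (Real.pi * I / 24) := by
      rw [← Complex.exp_add, ← Complex.exp_add, ← Complex.exp_add]
      congr 1; push_cast; ring
    rw [ee]
    simp only [div_eq_mul_inv] at m ⊢
    linear_combination (Complex.exp (-((6 : ℕ) * (Real.pi * I * 12⁻¹))) *
      (Complex.exp (-((1 : ℕ) * (Real.pi * I * 12⁻¹))) * (Complex.exp (Real.pi * I * 24⁻¹) *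
        dedekindEta τ ^ 3 * (dedekindEta (τ * 2⁻¹) * dedekindEta (2 * τ))⁻¹))) * m
  · have hs : 0 < (-1 / (τ - 1) - (3 : ℕ)).im := by
      have := inv_im_pos hv
      rw [sub_im, natCast_im]; linarith
    have e1 : (τ - 1) / (3 * τ - 2) = -1 / (-1 / (τ - 1) - (3 : ℕ)) := by
      have : -1 / (τ - 1) - ((3 : ℕ) : ℂ) = -(3 * τ - 2) / (τ - 1) := by
        push_cast; field_simp; ring
      rw [this]; field_simp
    have e2 : -((-1 / (τ - 1) - ((3 : ℕ) : ℂ)) * (τ - 1)) = 3 * τ - 2 := by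
      push_cast; field_simp; ring
    have m := rt_mul1 hs hv (by rw [e2]; exact hw)
    rw [e2, ← hX'] at m
    have e4 : dedekindEta (τ - 1) = Complex.exp (-(Real.pi * I / 12)) * dedekindEta τ := by simpa using de_Tn' 1 τ
    rw [e1, de_S hs, de_Tn', de_S hv, e4]
    have ee : Complex.exp (-(Real.pi : ℂ) * I / 12) = Complex.exp (Real.pi * I / 4) *
        Complex.exp (-((3 : ℕ) * (Real.pi * I / 12))) * Complex.exp (-(Real.pi * I / 12)) := by
      rw [← Complex.exp_add, ← Complex.exp_add]
      congr 1; push_cast; ring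
    rw [ee]
    linear_combination (Complex.exp (-((3 : ℕ) * (Real.pi * I / 12))) *
      Complex.exp (-(Real.pi * I / 12)) * dedekindEta τ) * m
  · have hw2 : 0 < (2 * (3 * τ - 2)).im := by simpa using hτ
    have hwh : 0 < ((3 * τ - 2) / 2).im := by simpa using hτ
    have e1 : 3 * ((τ - 1) / (3 * τ - 2)) / 2 = -1 / (2 * (3 * τ - 2)) + 1 / 2 := by
      field_simp; ring
    have s1 : 2 * (-1 / (2 * (3 * τ - 2))) = -1 / (3 * τ - 2) := by field_simp
    have s2 : 4 * (-1 / (2 * (3 * τ - 2))) = -1 / ((3 * τ - 2) / 2) := by field_simp; norm_num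
    have r2 : rt (2 * (3 * τ - 2)) = Real.sqrt 2 * rt (3 * τ - 2) := by
      simpa using rt_scale (r := 2) two_pos hw
    have t1 : dedekindEta (3 * τ - 2) =
        Complex.exp (-(2 * (Real.pi * I / 12))) * dedekindEta (3 * τ) := by simpa using de_Tn' 2 (3 * τ)
    have t2 : dedekindEta (2 * (3 * τ - 2)) =
        Complex.exp (-((4 : ℕ) * (Real.pi * I / 12))) * dedekindEta (6 * τ) := by
      rw [show 2 * (3 * τ - 2) = 6 * τ - (4 : ℕ) by push_cast; ring]
      exact de_Tn' 4 (6 * τ)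
    have t3 : dedekindEta ((3 * τ - 2) / 2) =
        Complex.exp (-((1 : ℕ) * (Real.pi * I / 12))) * dedekindEta (3 * τ / 2) := by
      rw [show (3 * τ - 2) / 2 = 3 * τ / 2 - (1 : ℕ) by push_cast; ring]
      exact de_Tn' 1 (3 * τ / 2)
    rw [e1, de_half (inv_im_pos hw2), s1, s2, de_S hw, de_S hw2, de_S hwh, r2, rt_half hw, ← hX',
      t1, t2, t3]
    have n1 : dedekindEta (6 * τ) ≠ 0 := de_ne (by simpa using hτ)
    have n2 : dedekindEta (3 * τ / 2) ≠ 0 := de_ne (by simpa using hτ)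
    have ee : Complex.exp (Real.pi * I / 24) * Complex.exp (-(2 * (Real.pi * I / 12))) ^ 3 =
        Complex.exp (-(Real.pi : ℂ) * I / 24) * (Complex.exp (-((4 : ℕ) * (Real.pi * I / 12))) *
          Complex.exp (-((1 : ℕ) * (Real.pi * I / 12)))) := by
      rw [← Complex.exp_nat_mul, ← Complex.exp_add, ← Complex.exp_add, ← Complex.exp_add]
      congr 1; push_cast; ring
    have n3 := Complex.exp_ne_zero (-((4 : ℕ) * (Real.pi * I / 12)))
    have n4 := Complex.exp_ne_zero (-((1 : ℕ) * (Real.pi * I / 12)))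
    generalize Complex.exp (-((4 : ℕ) * (Real.pi * I / 12))) = E4 at *
    generalize Complex.exp (-((1 : ℕ) * (Real.pi * I / 12))) = E1 at *
    generalize Complex.exp (-(2 * (Real.pi * I / 12))) = E2 at *
    generalize Complex.exp (Real.pi * I / 24) = F at *
    generalize Complex.exp (-(Real.pi : ℂ) * I / 24) = G at *
    rw [div_eq_div_iff (by simp [n1, n2, n3, n4, hX0]) (by simp [n1, n2])]
    have c : (Real.sqrt 2 : ℂ) * (X / (Real.sqrt 2 : ℂ)) = X := by field_simp
    linear_combination (X ^ 3 * dedekindEta (3 * τ) ^ 3 *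
      (dedekindEta (3 * τ / 2) * dedekindEta (6 * τ))) * ee -
      (G * E4 * E1 * X ^ 2 * dedekindEta (3 * τ) ^ 3 *
      (dedekindEta (3 * τ / 2) * dedekindEta (6 * τ))) * c
  · have hτ2 : 0 < (τ / 2).im := by simpa using hτ
    have hr : 0 < (-1 / (τ / 2) + (2 : ℕ)).im := by
      have := inv_im_pos hτ2
      rw [add_im, natCast_im]; linarith
    have hs : 0 < (-1 / (-1 / (τ / 2) + (2 : ℕ)) - (1 : ℕ)).im := by
      have := inv_im_pos hr
      rw [sub_im, natCast_im]; linarith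
    have er : -1 / (τ / 2) + ((2 : ℕ) : ℂ) = 2 * (τ - 1) / τ := by
      push_cast; field_simp; ring
    have es : -1 / (-1 / (τ / 2) + ((2 : ℕ) : ℂ)) - ((1 : ℕ) : ℂ) =
        -(3 * τ - 2) / (2 * (τ - 1)) := by
      rw [er]; push_cast; field_simp; ring
    have e1 : 2 * ((τ - 1) / (3 * τ - 2)) =
        -1 / (-1 / (-1 / (τ / 2) + ((2 : ℕ) : ℂ)) - ((1 : ℕ) : ℂ)) := by
      rw [es]; field_simp
    have e2 : -((-1 / (-1 / (τ / 2) + ((2 : ℕ) : ℂ)) - ((1 : ℕ) : ℂ)) *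
        (-1 / (τ / 2) + ((2 : ℕ) : ℂ))) = -1 / (τ / 2) + (3 : ℕ) := by
      rw [es, er]; push_cast; field_simp; ring
    have hc : 0 < (-1 / (τ / 2) + (3 : ℕ)).im := by
      have := inv_im_pos hτ2
      rw [add_im, natCast_im]; linarith
    have m1 := rt_mul1 hs hr (by rw [e2]; exact hc)
    rw [e2] at m1
    have e3 : (-1 / (τ / 2) + ((3 : ℕ) : ℂ)) * (τ / 2) = (3 * τ - 2) / 2 := by
      push_cast; field_simp; ring
    have m2 := rt_mul2 hc hτ2 (by rw [e3]; simpa using hw)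
    rw [e3, rt_half hw, ← hX'] at m2
    rw [e1, de_S hs, de_Tn', de_S hr, de_Tn, de_S hτ2]
    have ee : Complex.exp ((Real.pi : ℂ) * I / 12) = Complex.exp (-((1 : ℕ) * (Real.pi * I / 12))) *
        Complex.exp ((2 : ℕ) * (Real.pi * I / 12)) := by
      rw [← Complex.exp_add]; congr 1; push_cast; ring
    have e0 : Complex.exp (Real.pi * I / 4) * Complex.exp (-(Real.pi * I / 4)) = 1 := by
      rw [← Complex.exp_add]; simp
    rw [ee]
    generalize Complex.exp (-((1 : ℕ) * (Real.pi * I / 12))) = E1 at *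
    generalize Complex.exp ((2 : ℕ) * (Real.pi * I / 12)) = E2 at *
    linear_combination (E1 * E2 * dedekindEta (τ / 2) * rt (τ / 2)) * m1 +
      (E1 * E2 * dedekindEta (τ / 2) * Complex.exp (Real.pi * I / 4)) * m2 +
      (E1 * E2 * dedekindEta (τ / 2) * (X / (Real.sqrt 2 : ℂ))) * e0
  · have e1 : 3 * ((τ - 1) / (3 * τ - 2)) = -1 / (3 * τ - 2) + 1 := by
      field_simp; ring
    have t1 : dedekindEta (3 * τ - 2) =
        Complex.exp (-(2 * (Real.pi * I / 12))) * dedekindEta (3 * τ) := by simpa using de_Tn' 2 (3 * τ)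
    rw [e1, de_T, de_S hw, ← hX', t1]
    have ee : Complex.exp (-(Real.pi : ℂ) * I / 12) = Complex.exp (Real.pi * I / 12) *
        Complex.exp (-(2 * (Real.pi * I / 12))) := by
      rw [← Complex.exp_add]; congr 1; ring
    rw [ee]; ring
  · have hwh : 0 < ((3 * τ - 2) / 2).im := by simpa using hτ
    have e1 : 6 * ((τ - 1) / (3 * τ - 2)) = -1 / ((3 * τ - 2) / 2) + (2 : ℕ) := by
      rw [div_div_eq_mul_div]; push_cast; rw [div_add' _ _ _ hw0, mul_div_assoc', div_left_inj' hw0]; ring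
    have t3 : dedekindEta ((3 * τ - 2) / 2) =
        Complex.exp (-((1 : ℕ) * (Real.pi * I / 12))) * dedekindEta (3 * τ / 2) := by
      rw [show (3 * τ - 2) / 2 = 3 * τ / 2 - (1 : ℕ) by push_cast; ring]
      exact de_Tn' 1 (3 * τ / 2)
    rw [e1, de_Tn, de_S hwh, rt_half hw, ← hX', t3]
    have ee : Complex.exp ((Real.pi : ℂ) * I / 12) = Complex.exp ((2 : ℕ) * (Real.pi * I / 12)) *
        Complex.exp (-((1 : ℕ) * (Real.pi * I / 12))) := by
      rw [← Complex.exp_add]; congr 1; push_cast; ring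
    rw [ee]; ring
end

section
/- For all τ in the complex upper half-plane, the Hauptmodul ζ = ζ(τ) satisfies: ζ = −2φ1φ2²φ5³/(φ3φ4²), ζ+1 = −φ1²φ2φ5³/(φ3²φ4), ζ−1 = −3φ1²φ2φ3²φ5/φ4, ζ+2 = 6φ1φ2²φ4²φ5/φ3, and 2ζ+1 = −3φ5¹⁰/(φ3⁴φ4⁴), where φ_j = φ_j(τ). -/
open Complex

/-- The Hauptmodul ζ(τ) = ω²θ(-1;p²)θ(-pω;p²)/(θ(-p;p²)θ(-ω;p²)),
with p = e^{πiτ} and ω = e^{2πi/3}. -/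
noncomputable def hauptmodul (τ : ℂ) : ℂ :=
  let p := Complex.exp ((Real.pi : ℂ) * Complex.I * τ)
  let ω := Complex.exp (2 * (Real.pi : ℂ) * Complex.I / 3)
  ω ^ 2 * jtheta (-1) (p ^ 2) * jtheta (-(p * ω)) (p ^ 2)
    / (jtheta (-p) (p ^ 2) * jtheta (-ω) (p ^ 2))

open Filter Topology

/-- q-Pochhammer. -/
noncomputable def qpoc (x q : ℂ) : ℂ := ∏' j : ℕ, (1 - q ^ j * x)

lemma qpoc_summ (x : ℂ) {q : ℂ} (hq : ‖q‖ < 1) : Summable fun j : ℕ => ‖-(q ^ j * x)‖ := by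
  simp only [norm_neg, norm_mul, norm_pow]
  exact (summable_geometric_of_lt_one (norm_nonneg _) hq).mul_right _

lemma qpoc_mult (x : ℂ) {q : ℂ} (hq : ‖q‖ < 1) : Multipliable fun j : ℕ => (1 - q ^ j * x) := by
  simpa [sub_eq_add_neg] using multipliable_one_add_of_summable (qpoc_summ x hq)

lemma qpoc_ne_zero {x q : ℂ} (hq : ‖q‖ < 1) (hx : ‖x‖ < 1) : qpoc x q ≠ 0 := by
  have := tprod_one_add_ne_zero_of_summable (f := fun j : ℕ => -(q ^ j * x)) ?_ (qpoc_summ x hq)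
  · simpa [sub_eq_add_neg, qpoc] using this
  · intro j h
    have h1 : q ^ j * x = 1 := by linear_combination -h
    have h2 : ‖q ^ j * x‖ < 1 := by
      rw [norm_mul, norm_pow]
      have := pow_le_one₀ (n := j) (norm_nonneg q) hq.le
      nlinarith [norm_nonneg x]
    rw [h1] at h2
    simp at h2

lemma qpoc_succ (x : ℂ) {q : ℂ} (hq : ‖q‖ < 1) : qpoc x q = (1 - x) * qpoc (q * x) q := by
  unfold qpoc
  rw [tprod_eq_zero_mul' ]
  · simp only [pow_zero, one_mul, pow_succ, mul_assoc]
  · simpa only [pow_succ, mul_assoc] using qpoc_mult (q * x) hq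

lemma norm_pow_lt' {q : ℂ} (hq : ‖q‖ < 1) {n : ℕ} (hn : n ≠ 0) : ‖q ^ n‖ < 1 := by
  rw [norm_pow]; exact pow_lt_one₀ (norm_nonneg _) hq hn

lemma qpoc_neg (x : ℂ) {q : ℂ} (hq : ‖q‖ < 1) : qpoc x q * qpoc (-x) q = qpoc (x ^ 2) (q ^ 2) := by
  unfold qpoc
  rw [← (qpoc_mult x hq).tprod_mul (qpoc_mult (-x) hq)]
  congr 1; ext j; ring

lemma qpoc_cube (x : ℂ) {q w : ℂ} (hq : ‖q‖ < 1) (hw : w ^ 2 + w + 1 = 0) :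
    qpoc x q * (qpoc (x * w) q * qpoc (x * w ^ 2) q) = qpoc (x ^ 3) (q ^ 3) := by
  unfold qpoc
  rw [← (qpoc_mult (x * w) hq).tprod_mul (qpoc_mult (x * w ^ 2) hq),
    ← (qpoc_mult x hq).tprod_mul ((qpoc_mult (x * w) hq).mul (qpoc_mult (x * w ^ 2) hq))]
  congr 1; ext j
  rw [← pow_mul, mul_comm 3 j, pow_mul]
  generalize q ^ j = y
  linear_combination (-(y * x) + w * x ^ 2 * y ^ 2 - (w - 1) * y ^ 3 * x ^ 3) * hw

lemma qpoc_split (x : ℂ) {q : ℂ} (hq : ‖q‖ < 1) :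
    qpoc x q = qpoc x (q ^ 2) * qpoc (q * x) (q ^ 2) := by
  have h2 := norm_pow_lt' hq two_ne_zero
  unfold qpoc
  rw [← tprod_even_mul_odd (f := fun j : ℕ => (1 - q ^ j * x))]
  · simp only [pow_mul, pow_succ, mul_assoc]
  · simpa only [pow_mul] using qpoc_mult x h2
  · simpa only [pow_mul, pow_succ (q ^ _), pow_add, pow_one, mul_assoc] using qpoc_mult (q * x) h2

lemma jtheta_mult (x : ℂ) {q : ℂ} (hq : ‖q‖ < 1) :
    Multipliable fun j : ℕ => ((1 - q ^ j * x) * (1 - q ^ (j + 1) * x⁻¹)) := by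
  refine (qpoc_mult x hq).mul ?_
  simpa only [pow_succ, mul_assoc] using qpoc_mult (q * x⁻¹) hq

lemma jtheta_eq (x : ℂ) {q : ℂ} (hq : ‖q‖ < 1) : jtheta x q = qpoc x q * qpoc (q * x⁻¹) q := by
  unfold jtheta
  rw [(qpoc_mult x hq).tprod_mul]
  · simp only [qpoc, pow_succ, mul_assoc]
  · simpa only [pow_succ, mul_assoc] using qpoc_mult (q * x⁻¹) hq

lemma jtheta_inv {x : ℂ} (hx : x ≠ 0) {q : ℂ} (hq : ‖q‖ < 1) :
    jtheta (x⁻¹) q = -(jtheta x q) / x := by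
  rw [jtheta_eq _ hq, jtheta_eq _ hq, qpoc_succ x hq, qpoc_succ x⁻¹ hq, inv_inv]
  field_simp
  ring
/-- reciprocal finite Euler product, zero for negative index. -/
noncomputable def binv (q : ℂ) (m : ℤ) : ℂ :=
  if 0 ≤ m then (∏ i ∈ Finset.range m.toNat, (1 - q ^ (i + 1)))⁻¹ else 0

lemma one_sub_pow_ne {q : ℂ} (hq : ‖q‖ < 1) (i : ℕ) : 1 - q ^ (i + 1) ≠ 0 := by
  intro h
  have h1 := norm_pow_lt' hq (Nat.succ_ne_zero i)
  have h2 : q ^ (i + 1) = 1 := by linear_combination -h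
  rw [Nat.succ_eq_add_one, h2] at h1
  simp at h1

lemma binv_rec {q : ℂ} (hq : ‖q‖ < 1) (m : ℤ) : binv q (m - 1) = (1 - q ^ m) * binv q m := by
  unfold binv
  rcases lt_trichotomy m 0 with h | h | h
  · rw [if_neg (by omega), if_neg (by omega)]; simp
  · subst h; simp
  · obtain ⟨k, rfl⟩ : ∃ k : ℕ, m = k + 1 := ⟨(m - 1).toNat, by omega⟩
    rw [if_pos (by omega), if_pos (by omega)]
    have e1 : ((k : ℤ) + 1 - 1).toNat = k := by omega
    have e2 : ((k : ℤ) + 1).toNat = k + 1 := by omega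
    rw [e1, e2, Finset.prod_range_succ]
    have e3 : q ^ ((k : ℤ) + 1) = q ^ (k + 1) := by exact_mod_cast zpow_natCast q (k + 1)
    rw [e3]
    have := one_sub_pow_ne hq k
    field_simp

noncomputable def Acoef (q : ℂ) (n : ℕ) (k : ℤ) : ℂ :=
  (∏ i ∈ Finset.range (2 * n), (1 - q ^ (i + 1))) * (binv q (n - k) * binv q (n + k))

lemma Acoef_rec {p : ℂ} (hp0 : p ≠ 0) (hp : ‖p ^ 2‖ < 1) (n : ℕ) (k : ℤ) :
    p ^ (k ^ 2 - k) * Acoef (p ^ 2) (n + 1) k =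
      (1 + (p ^ 2) ^ (2 * n + 1)) * (p ^ (k ^ 2 - k) * Acoef (p ^ 2) n k)
      + (p ^ 2) ^ n * (p ^ ((k - 1) ^ 2 - (k - 1)) * Acoef (p ^ 2) n (k - 1))
      + (p ^ 2) ^ (n + 1) * (p ^ ((k + 1) ^ 2 - (k + 1)) * Acoef (p ^ 2) n (k + 1)) := by
  unfold Acoef
  set q := p ^ 2 with hqdef
  have hq0 : q ≠ 0 := pow_ne_zero _ hp0
  have r1 : binv q ((n : ℤ) - k) = (1 - q ^ ((n : ℤ) - k + 1)) * binv q ((n : ℤ) - k + 1) := by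
    rw [← binv_rec hp]; congr 1; ring
  have r2 : binv q ((n : ℤ) - (k + 1)) = (1 - q ^ ((n : ℤ) - k)) * binv q ((n : ℤ) - k) := by
    rw [← binv_rec hp]; congr 1; ring
  have r3 : binv q ((n : ℤ) + k) = (1 - q ^ ((n : ℤ) + k + 1)) * binv q ((n : ℤ) + k + 1) := by
    rw [← binv_rec hp]; congr 1; ring
  have r4 : binv q ((n : ℤ) + (k - 1)) = (1 - q ^ ((n : ℤ) + k)) * binv q ((n : ℤ) + k) := by
    rw [← binv_rec hp]; congr 1; ring
  have r5 : ((n : ℤ) - (k - 1)) = (n : ℤ) - k + 1 := by ring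
  have r6 : ((n : ℤ) + (k + 1)) = (n : ℤ) + k + 1 := by ring
  have r7 : (((n + 1 : ℕ) : ℤ) - k) = (n : ℤ) - k + 1 := by push_cast; ring
  have r8 : (((n + 1 : ℕ) : ℤ) + k) = (n : ℤ) + k + 1 := by push_cast; ring
  rw [r7, r8, r5, r6, r2, r4, r1, r3]
  generalize binv q ((n : ℤ) - k + 1) = B1
  generalize binv q ((n : ℤ) + k + 1) = B2
  rw [show 2 * (n + 1) = 2 * n + 1 + 1 by ring, Finset.prod_range_succ, Finset.prod_range_succ]
  generalize ∏ i ∈ Finset.range (2 * n), (1 - q ^ (i + 1)) = Pn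
  have s1 : p ^ ((k - 1) ^ 2 - (k - 1)) = p ^ (k ^ 2 - k) * (q ^ k)⁻¹ * q := by
    rw [hqdef, ← zpow_natCast, ← zpow_mul, ← zpow_neg, ← zpow_add₀ hp0, ← zpow_add₀ hp0]
    congr 1; push_cast; ring
  have s2 : p ^ ((k + 1) ^ 2 - (k + 1)) = p ^ (k ^ 2 - k) * q ^ k := by
    rw [hqdef, ← zpow_natCast, ← zpow_mul, ← zpow_add₀ hp0]
    congr 1; push_cast; ring
  rw [s1, s2]
  generalize p ^ (k ^ 2 - k) = G
  have hK : q ^ k ≠ 0 := zpow_ne_zero _ hq0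
  simp only [zpow_add₀ hq0, zpow_sub₀ hq0, zpow_one, zpow_natCast]
  have hN : q ^ (2 * n) = (q ^ n) ^ 2 := by rw [mul_comm, pow_mul]
  simp only [pow_add, pow_one, hN]
  generalize q ^ k = K at *
  generalize q ^ n = N at *
  field_simp
  ring

lemma hs_congr {f g : ℤ → ℂ} {a b : ℂ} (h : HasSum g b) (hf : ∀ k, f k = g k) (hab : a = b) :
    HasSum f a := by
  rw [hab, funext hf]; exact h

lemma finite_jtp {p : ℂ} (hp0 : p ≠ 0) (hp : ‖p ^ 2‖ < 1) {x : ℂ} (hx : x ≠ 0) (n : ℕ) :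
    HasSum (fun k : ℤ => (p ^ (k ^ 2 - k) * Acoef (p ^ 2) n k) * (-x) ^ k)
      (∏ j ∈ Finset.range n, ((1 - (p ^ 2) ^ j * x) * (1 - (p ^ 2) ^ (j + 1) * x⁻¹))) := by
  induction n with
  | zero =>
    convert hasSum_single (0 : ℤ) ?_ using 1
    · simp [Acoef, binv]
    · intro k hk
      rcases lt_or_gt_of_ne hk with h | h
      · have : ¬ (0 ≤ k) := by omega
        simp [Acoef, binv, this]
      · have : ¬ (k ≤ 0) := by omega
        simp [Acoef, binv, this]
  | succ n ih =>
    have hx' : -x ≠ 0 := neg_ne_zero.mpr hx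
    have h1 := ih.mul_left (1 + (p ^ 2) ^ (2 * n + 1))
    have h2 := ((Equiv.subRight (1 : ℤ)).hasSum_iff.mpr ih).mul_left ((p ^ 2) ^ n * (-x))
    have h3 := ((Equiv.addRight (1 : ℤ)).hasSum_iff.mpr ih).mul_left ((p ^ 2) ^ (n + 1) * (-x)⁻¹)
    have h4 := (h1.add h2).add h3
    refine hs_congr h4 (fun k => ?_) ?_
    · simp only [Function.comp, Equiv.subRight_apply, Equiv.coe_addRight]
      rw [Acoef_rec hp0 hp, zpow_sub₀ hx', zpow_add₀ hx', zpow_one]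
      field_simp
    · rw [Finset.prod_range_succ]
      field_simp
      ring

lemma summable_theta {p : ℂ} (hp0 : p ≠ 0) (hp : ‖p‖ < 1) {z : ℂ} (hz : z ≠ 0) :
    Summable fun k : ℤ => ‖p ^ (k ^ 2) * z ^ k‖ := by
  have hpi : (Real.pi : ℂ) ≠ 0 := by exact_mod_cast Real.pi_ne_zero
  have hI := Complex.I_ne_zero
  have him : 0 < (Complex.log p / (Real.pi * Complex.I)).im := by
    have : Complex.log p / (Real.pi * Complex.I) = ((-1 / Real.pi : ℝ) : ℂ) * (Complex.I * Complex.log p) := by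
      push_cast; field_simp; rw [Complex.I_sq]; ring
    rw [this, Complex.im_ofReal_mul, Complex.I_mul_im, Complex.log_re]
    have h1 : Real.log ‖p‖ < 0 := Real.log_neg (norm_pos_iff.mpr hp0) hp
    have h2 : -1 / Real.pi < 0 := by
      have := Real.pi_pos
      exact div_neg_of_neg_of_pos (by norm_num) this
    exact mul_pos_of_neg_of_neg h2 h1
  have := (summable_jacobiTheta₂_term_iff (Complex.log z / (2 * Real.pi * Complex.I)) _).mpr him
  refine this.norm.congr ?_
  intro k
  congr 1
  unfold jacobiTheta₂_term
  rw [Complex.exp_add]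
  have e1 : 2 * (Real.pi : ℂ) * I * k * (Complex.log z / (2 * Real.pi * I)) = k * Complex.log z := by
    field_simp
  have e2 : (Real.pi : ℂ) * I * k ^ 2 * (Complex.log p / (Real.pi * I))
      = ((k ^ 2 : ℤ) : ℂ) * Complex.log p := by
    push_cast; field_simp
  rw [e1, e2, Complex.exp_int_mul, Complex.exp_int_mul, Complex.exp_log hz, Complex.exp_log hp0,
    mul_comm]

noncomputable def Fser (p x : ℂ) : ℂ := ∑' k : ℤ, p ^ (k ^ 2 - k) * (-x) ^ k

lemma summable_Fser {p : ℂ} (hp0 : p ≠ 0) (hp : ‖p‖ < 1) {z : ℂ} (hz : z ≠ 0) :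
    Summable fun k : ℤ => ‖p ^ (k ^ 2 - k) * (-z) ^ k‖ := by
  refine (summable_theta hp0 hp (z := -z / p) (div_ne_zero (neg_ne_zero.mpr hz) hp0)).congr ?_
  intro k
  congr 1
  rw [zpow_sub₀ hp0, div_zpow]
  ring

lemma binv_tendsto {q : ℂ} (hq : ‖q‖ < 1) :
    Tendsto (fun m : ℕ => ∏ i ∈ Finset.range m, (1 - q ^ (i + 1))) atTop (𝓝 (qpoc q q)) := by
  have := (qpoc_mult q hq).hasProd.tendsto_prod_nat
  simpa only [qpoc, pow_succ] using this

lemma jtp {p : ℂ} (hp0 : p ≠ 0) (hp : ‖p‖ < 1) {x : ℂ} (hx : x ≠ 0) :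
    jtheta x (p ^ 2) = (qpoc (p ^ 2) (p ^ 2))⁻¹ * Fser p x := by
  have hq := norm_pow_lt' hp two_ne_zero
  set q := p ^ 2 with hqd
  have hQ : qpoc q q ≠ 0 := qpoc_ne_zero hq hq
  have t1 := binv_tendsto hq
  have t2 := t1.inv₀ hQ
  obtain ⟨M1, hM1⟩ := t1.norm.bddAbove_range
  obtain ⟨M2, hM2⟩ := t2.norm.bddAbove_range
  have hM1' : ∀ n, ‖∏ i ∈ Finset.range n, (1 - q ^ (i + 1))‖ ≤ M1 := fun n => hM1 ⟨n, rfl⟩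
  have hM2' : ∀ n, ‖(∏ i ∈ Finset.range n, (1 - q ^ (i + 1)))⁻¹‖ ≤ M2 := fun n => hM2 ⟨n, rfl⟩
  have M1p : 0 ≤ M1 := (norm_nonneg _).trans (hM1' 0)
  have M2p : 0 ≤ M2 := (norm_nonneg _).trans (hM2' 0)
  have hb : ∀ m, ‖binv q m‖ ≤ M2 := by
    intro m
    unfold binv
    split_ifs
    · exact hM2' _
    · simpa using M2p
  have hA : ∀ n k, ‖Acoef q n k‖ ≤ M1 * (M2 * M2) := by
    intro n k
    unfold Acoef
    rw [norm_mul, norm_mul]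
    gcongr
    · exact hM1' _
    · exact hb _
    · exact hb _
  have hbt : ∀ k : ℤ, Tendsto (fun n : ℕ => binv q (n + k)) atTop (𝓝 (qpoc q q)⁻¹) := by
    intro k
    have u : Tendsto (fun n : ℕ => ((n : ℤ) + k).toNat) atTop atTop := by
      refine tendsto_atTop_mono' (f₁ := fun n : ℕ => n - k.natAbs) _ ?_ (tendsto_sub_atTop_nat _)
      exact Eventually.of_forall fun n => by simp only; omega
    refine (t2.comp u).congr' ?_
    filter_upwards [eventually_ge_atTop k.natAbs] with n hn
    unfold binv
    rw [if_pos (by omega)]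
    rfl
  have hAt : ∀ k : ℤ, Tendsto (fun n : ℕ => Acoef q n k) atTop (𝓝 (qpoc q q)⁻¹) := by
    intro k
    have u : Tendsto (fun n : ℕ => 2 * n) atTop atTop :=
      tendsto_id.const_mul_atTop' (by norm_num)
    have := (t1.comp u).mul ((hbt (-k)).mul (hbt k))
    rw [show qpoc q q * ((qpoc q q)⁻¹ * (qpoc q q)⁻¹) = (qpoc q q)⁻¹ by field_simp] at this
    exact this
  have L1 : Tendsto (fun n : ℕ => ∑' k : ℤ, (p ^ (k ^ 2 - k) * Acoef q n k) * (-x) ^ k) atTop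
      (𝓝 (∑' k : ℤ, (p ^ (k ^ 2 - k) * (qpoc q q)⁻¹) * (-x) ^ k)) := by
    refine tendsto_tsum_of_dominated_convergence
      (bound := fun k : ℤ => (M1 * (M2 * M2)) * ‖p ^ (k ^ 2 - k) * (-x) ^ k‖)
      ((summable_Fser hp0 hp hx).mul_left _) ?_ ?_
    · intro k
      exact ((hAt k).const_mul _).mul_const _
    · refine Eventually.of_forall fun n k => ?_
      rw [norm_mul, norm_mul, norm_mul]
      have := mul_le_mul_of_nonneg_right (hA n k)
        (show 0 ≤ ‖p ^ (k ^ 2 - k)‖ * ‖(-x) ^ k‖ by positivity)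
      linarith
  have L2 : Tendsto (fun n : ℕ => ∑' k : ℤ, (p ^ (k ^ 2 - k) * Acoef q n k) * (-x) ^ k) atTop
      (𝓝 (jtheta x q)) := by
    refine ((jtheta_mult x hq).hasProd.tendsto_prod_nat).congr fun n => ?_
    exact (finite_jtp hp0 hq hx n).tsum_eq.symm
  rw [tendsto_nhds_unique L2 L1, Fser, ← tsum_mul_left]
  congr 1; ext k; ring

noncomputable def bser (p x : ℂ) : ℂ := ∑' k : ℤ, p ^ (2 * k ^ 2) * x ^ (2 * k)
noncomputable def hser (p x : ℂ) : ℂ := ∑' k : ℤ, p ^ (2 * k ^ 2 + 2 * k) * x ^ (2 * k + 1)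

lemma summable_bser {p : ℂ} (hp0 : p ≠ 0) (hp : ‖p‖ < 1) {x : ℂ} (hx : x ≠ 0) :
    Summable fun k : ℤ => ‖p ^ (2 * k ^ 2) * x ^ (2 * k)‖ := by
  refine (summable_theta (p := p ^ 2) (pow_ne_zero _ hp0) (norm_pow_lt' hp two_ne_zero)
    (z := x ^ 2) (pow_ne_zero _ hx)).congr ?_
  intro k
  rw [zpow_mul, zpow_mul]
  norm_cast

lemma summable_hser {p : ℂ} (hp0 : p ≠ 0) (hp : ‖p‖ < 1) {x : ℂ} (hx : x ≠ 0) :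
    Summable fun k : ℤ => ‖p ^ (2 * k ^ 2 + 2 * k) * x ^ (2 * k + 1)‖ := by
  refine ((summable_bser hp0 hp (x := p * x) (mul_ne_zero hp0 hx)).mul_left ‖x‖).congr ?_
  intro k
  rw [← norm_mul]
  congr 1
  rw [zpow_add₀ hp0, zpow_add₀ hx, zpow_one, mul_zpow]
  ring

def parMap : (ℤ × ℤ) ⊕ (ℤ × ℤ) → ℤ × ℤ
  | .inl (a, b) => (a + 1 + b, a + 1 - b)
  | .inr (a, b) => (a + b + 1, a - b)

lemma parMap_bij : Function.Bijective parMap := by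
  constructor
  · rintro (⟨a, b⟩ | ⟨a, b⟩) (⟨c, d⟩ | ⟨c, d⟩) h <;> simp only [parMap, Prod.mk.injEq] at h
    · have : a = c ∧ b = d := by omega
      rw [this.1, this.2]
    · omega
    · omega
    · have : a = c ∧ b = d := by omega
      rw [this.1, this.2]
  · rintro ⟨m, n⟩
    rcases Int.even_or_odd' (m + n) with ⟨c, hc | hc⟩
    · refine ⟨.inl (c - 1, m - c), ?_⟩
      simp only [parMap, Prod.mk.injEq]; omega
    · refine ⟨.inr (c, m - c - 1), ?_⟩
      simp only [parMap, Prod.mk.injEq]; omega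

lemma Fser_mul {p : ℂ} (hp0 : p ≠ 0) (hp : ‖p‖ < 1) {x y : ℂ} (hx : x ≠ 0) (hy : y ≠ 0) :
    Fser p (x * y) * Fser p (x / y) =
      x * (hser p x * bser p y - bser p x * hser p y) := by
  have s1 := summable_Fser hp0 hp (mul_ne_zero hx hy)
  have s2 := summable_Fser hp0 hp (div_ne_zero hx hy)
  have e0 := tsum_mul_tsum_of_summable_norm s1 s2
  have hs := summable_mul_of_summable_norm s1 s2
  have hhb := tsum_mul_tsum_of_summable_norm (summable_hser hp0 hp hx) (summable_bser hp0 hp hy)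
  have hbh := tsum_mul_tsum_of_summable_norm (summable_bser hp0 hp hx) (summable_hser hp0 hp hy)
  have shb := summable_mul_of_summable_norm (summable_hser hp0 hp hx) (summable_bser hp0 hp hy)
  have sbh := summable_mul_of_summable_norm (summable_bser hp0 hp hx) (summable_hser hp0 hp hy)
  unfold Fser bser hser
  rw [e0, hhb, hbh, ← (Equiv.ofBijective _ parMap_bij).tsum_eq]
  have k1 : ∀ a b : ℤ, (p ^ ((a + 1 + b) ^ 2 - (a + 1 + b)) * (-(x * y)) ^ (a + 1 + b)) *
      (p ^ ((a + 1 - b) ^ 2 - (a + 1 - b)) * (-(x / y)) ^ (a + 1 - b)) =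
      x * ((p ^ (2 * a ^ 2 + 2 * a) * x ^ (2 * a + 1)) * (p ^ (2 * b ^ 2) * y ^ (2 * b))) := by
    intro a b
    have g1 : p ^ ((a + 1 + b) ^ 2 - (a + 1 + b)) * p ^ ((a + 1 - b) ^ 2 - (a + 1 - b)) = p ^ (2 * a ^ 2 + 2 * a) * p ^ (2 * b ^ 2) := by
      rw [← zpow_add₀ hp0, ← zpow_add₀ hp0]; congr 1; ring
    have g2 : (-x) ^ (a + 1 + b) * (-x) ^ (a + 1 - b) = x * x ^ (2 * a + 1) := by
      rw [← zpow_add₀ (neg_ne_zero.mpr hx)]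
      rw [Even.neg_zpow ⟨a + 1, by ring⟩, ← zpow_one_add₀ hx]; congr 1; ring
    have g3 : y ^ (a + 1 + b) * (y ^ (a + 1 - b))⁻¹ = y ^ (2 * b) := by
      rw [← zpow_neg, ← zpow_add₀ hy]; congr 1; ring
    rw [show -(x * y) = (-x) * y by ring, show -(x / y) = (-x) * y⁻¹ by ring, mul_zpow, mul_zpow,
      inv_zpow]
    linear_combination ((-x) ^ (a + 1 + b) * (-x) ^ (a + 1 - b) * (y ^ (a + 1 + b) * (y ^ (a + 1 - b))⁻¹)) * g1 +
      (p ^ (2 * a ^ 2 + 2 * a) * p ^ (2 * b ^ 2) * (y ^ (a + 1 + b) * (y ^ (a + 1 - b))⁻¹)) * g2 +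
      (p ^ (2 * a ^ 2 + 2 * a) * p ^ (2 * b ^ 2) * (x * x ^ (2 * a + 1))) * g3
  have k2 : ∀ a b : ℤ, (p ^ ((a + b + 1) ^ 2 - (a + b + 1)) * (-(x * y)) ^ (a + b + 1)) *
      (p ^ ((a - b) ^ 2 - (a - b)) * (-(x / y)) ^ (a - b)) =
      -x * ((p ^ (2 * a ^ 2) * x ^ (2 * a)) * (p ^ (2 * b ^ 2 + 2 * b) * y ^ (2 * b + 1))) := by
    intro a b
    have g1 : p ^ ((a + b + 1) ^ 2 - (a + b + 1)) * p ^ ((a - b) ^ 2 - (a - b)) = p ^ (2 * a ^ 2) * p ^ (2 * b ^ 2 + 2 * b) := by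
      rw [← zpow_add₀ hp0, ← zpow_add₀ hp0]; congr 1; ring
    have g2 : (-x) ^ (a + b + 1) * (-x) ^ (a - b) = -(x * x ^ (2 * a)) := by
      rw [← zpow_add₀ (neg_ne_zero.mpr hx)]
      rw [Odd.neg_zpow ⟨a, by ring⟩, ← zpow_one_add₀ hx]; congr 2; ring
    have g3 : y ^ (a + b + 1) * (y ^ (a - b))⁻¹ = y ^ (2 * b + 1) := by
      rw [← zpow_neg, ← zpow_add₀ hy]; congr 1; ring
    rw [show -(x * y) = (-x) * y by ring, show -(x / y) = (-x) * y⁻¹ by ring, mul_zpow, mul_zpow,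
      inv_zpow]
    linear_combination ((-x) ^ (a + b + 1) * (-x) ^ (a - b) * (y ^ (a + b + 1) * (y ^ (a - b))⁻¹)) * g1 +
      (p ^ (2 * a ^ 2) * p ^ (2 * b ^ 2 + 2 * b) * (y ^ (a + b + 1) * (y ^ (a - b))⁻¹)) * g2 +
      (p ^ (2 * a ^ 2) * p ^ (2 * b ^ 2 + 2 * b) * (-(x * x ^ (2 * a)))) * g3
  rw [Summable.tsum_sum]
  · simp only [Equiv.ofBijective_apply, parMap, k1, k2]
    rw [tsum_mul_left, tsum_mul_left]
    ring
  · refine (shb.mul_left x).congr ?_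
    rintro ⟨a, b⟩
    exact (k1 a b).symm
  · refine (sbh.mul_left (-x)).congr ?_
    rintro ⟨a, b⟩
    exact (k2 a b).symm

lemma weierstrass {p : ℂ} (hp0 : p ≠ 0) (hp : ‖p‖ < 1) {x y u v : ℂ} (hx : x ≠ 0) (hy : y ≠ 0)
    (hu : u ≠ 0) (hv : v ≠ 0) :
    jtheta (x * y) (p ^ 2) * jtheta (x / y) (p ^ 2) *
      (jtheta (u * v) (p ^ 2) * jtheta (u / v) (p ^ 2))
    - jtheta (x * v) (p ^ 2) * jtheta (x / v) (p ^ 2) *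
      (jtheta (u * y) (p ^ 2) * jtheta (u / y) (p ^ 2)) =
    u / y * (jtheta (y * v) (p ^ 2) * jtheta (y / v) (p ^ 2) *
      (jtheta (x * u) (p ^ 2) * jtheta (x / u) (p ^ 2))) := by
  have D : ∀ {a b : ℂ}, a ≠ 0 → b ≠ 0 → jtheta (a * b) (p ^ 2) * jtheta (a / b) (p ^ 2) =
      (qpoc (p ^ 2) (p ^ 2))⁻¹ ^ 2 * (a * (hser p a * bser p b - bser p a * hser p b)) := by
    intro a b ha hb
    rw [← Fser_mul hp0 hp ha hb, jtp hp0 hp (mul_ne_zero ha hb), jtp hp0 hp (div_ne_zero ha hb)]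
    ring
  rw [D hx hy, D hu hv, D hx hv, D hu hy, D hy hv, D hx hu]
  field_simp
  ring

noncomputable def EE (q : ℂ) : ℂ := qpoc q q

lemma EE_ne {q : ℂ} (hq : ‖q‖ < 1) : EE q ≠ 0 := qpoc_ne_zero hq hq

lemma qp_even_neg {p : ℂ} (hp : ‖p‖ < 1) : qpoc (-p) p = EE (p ^ 2) / EE p := by
  rw [eq_div_iff (EE_ne hp), mul_comm]
  exact qpoc_neg p hp

lemma qp_odd_pos {p : ℂ} (hp : ‖p‖ < 1) : qpoc p (p ^ 2) = EE p / EE (p ^ 2) := by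
  rw [eq_div_iff (EE_ne (norm_pow_lt' hp two_ne_zero))]
  have := qpoc_split p hp
  rw [← pow_two] at this
  exact this.symm

lemma qp_odd_neg {p : ℂ} (hp : ‖p‖ < 1) :
    qpoc (-p) (p ^ 2) = EE (p ^ 2) ^ 2 / (EE p * EE (p ^ 4)) := by
  have h2 := norm_pow_lt' hp two_ne_zero
  have h4 : ‖p ^ 4‖ < 1 := norm_pow_lt' hp (by norm_num)
  have := qpoc_neg p h2
  rw [qp_odd_pos h2, qp_odd_pos hp, ← pow_mul] at this
  have e1 := EE_ne hp
  have e2 := EE_ne h2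
  have e4 := EE_ne h4
  norm_num at this
  field_simp at this ⊢
  linear_combination this

lemma weier2 {p : ℂ} (hp0 : p ≠ 0) (hp : ‖p‖ < 1) (x y u v : ℂ) (hx : x ≠ 0) (hy : y ≠ 0)
    (hu : u ≠ 0) (hv : v ≠ 0) (a1 a2 a3 a4 b1 b2 b3 b4 c1 c2 c3 c4 : ℂ)
    (ha1 : x * y = a1) (ha2 : x = a2 * y) (ha3 : u * v = a3) (ha4 : u = a4 * v)
    (hb1 : x * v = b1) (hb2 : x = b2 * v) (hb3 : u * y = b3) (hb4 : u = b4 * y)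
    (hc1 : y * v = c1) (hc2 : y = c2 * v) (hc3 : x * u = c3) (hc4 : x = c4 * u) :
    jtheta a1 (p ^ 2) * jtheta a2 (p ^ 2) * (jtheta a3 (p ^ 2) * jtheta a4 (p ^ 2))
    - jtheta b1 (p ^ 2) * jtheta b2 (p ^ 2) * (jtheta b3 (p ^ 2) * jtheta b4 (p ^ 2)) =
    b4 * (jtheta c1 (p ^ 2) * jtheta c2 (p ^ 2) * (jtheta c3 (p ^ 2) * jtheta c4 (p ^ 2))) := by
  have W := weierstrass hp0 hp hx hy hu hv
  rwa [ha1, (div_eq_iff hy).mpr ha2, ha3, (div_eq_iff hv).mpr ha4, hb1, (div_eq_iff hv).mpr hb2,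
    hb3, (div_eq_iff hy).mpr hb4, hc1, (div_eq_iff hv).mpr hc2, hc3, (div_eq_iff hu).mpr hc4] at W

section
variable {p w : ℂ}

/-- Everything in terms of seven theta constants. -/
lemma theta_relations (hp0 : p ≠ 0) (hp : ‖p‖ < 1) (hw : w ^ 2 + w + 1 = 0)
    {A B C D Dm U V : ℂ}
    (hA : jtheta (-1) (p ^ 2) = A) (hB : jtheta (-p) (p ^ 2) = B) (hC : jtheta p (p ^ 2) = C)
    (hD : jtheta (p * w) (p ^ 2) = D) (hD' : jtheta (p * w ^ 2) (p ^ 2) = D)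
    (hDm : jtheta (-(p * w)) (p ^ 2) = Dm) (hDm' : jtheta (-(p * w ^ 2)) (p ^ 2) = Dm)
    (hU : jtheta w (p ^ 2) = (1 - w) * U) (hU' : jtheta (w ^ 2) (p ^ 2) = (1 - w ^ 2) * U)
    (hV : jtheta (-w) (p ^ 2) = (1 + w) * V) (hV' : jtheta (-w ^ 2) (p ^ 2) = (1 + w ^ 2) * V)
    (hU0 : U ≠ 0) :
    A * D * Dm - V * B * D = C * V * Dm ∧
    3 * U ^ 2 * D * C - Dm ^ 2 * V * A = Dm * B * V ^ 2 ∧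
    D ^ 2 * V ^ 2 + 3 * U ^ 2 * Dm ^ 2 = D * C * A ^ 2 ∧
    D ^ 2 * Dm * B - 3 * p * U ^ 2 * V * A = D * C * Dm ^ 2 := by
  have hq := norm_pow_lt' hp two_ne_zero
  have hw3 : w ^ 3 = 1 := by linear_combination (w - 1) * hw
  have hw0 : w ≠ 0 := by rintro rfl; norm_num at hw3
  have hwi : w⁻¹ = w ^ 2 := by field_simp; linear_combination -hw3
  have hw1 : 1 - w ≠ 0 := by
    intro h
    have : w = 1 := by linear_combination -h
    rw [this] at hw; norm_num at hw
  have hI : ∀ {x y : ℂ}, x ≠ 0 → x * y = 1 → jtheta y (p ^ 2) = -(jtheta x (p ^ 2)) / x := by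
    intro x y hx hxy
    rw [← jtheta_inv hx hq, eq_inv_of_mul_eq_one_right hxy]
  have i1 : jtheta (1 / p) (p ^ 2) = -C / p := by
    rw [← hC]; exact hI hp0 (by field_simp)
  have i2 : jtheta (-1 / p) (p ^ 2) = B / p := by
    rw [hI (x := -p) (neg_ne_zero.mpr hp0) (by field_simp), hB]; field_simp
  have i3 : jtheta (1 / (p * w)) (p ^ 2) = -D / (p * w) := by
    rw [← hD]; exact hI (mul_ne_zero hp0 hw0) (by field_simp)
  have i4 : jtheta (w / p) (p ^ 2) = -D / (p * w ^ 2) := by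
    rw [← hD']
    exact hI (mul_ne_zero hp0 (pow_ne_zero _ hw0)) (by field_simp; linear_combination hw3)
  have i5 : jtheta (-1 / (p * w)) (p ^ 2) = Dm / (p * w) := by
    rw [hI (x := -(p * w)) (neg_ne_zero.mpr (mul_ne_zero hp0 hw0)) (by field_simp), hDm]; field_simp
  have i6 : jtheta (-(p ^ 2 * w ^ 2)) (p ^ 2) = (1 + w ^ 2) * V / w ^ 2 := by
    have h1 := jtheta_eq (-(p ^ 2 * w ^ 2)) hq
    have h2 := jtheta_eq (-w ^ 2) hq
    rw [hV', qpoc_succ _ hq] at h2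
    rw [qpoc_succ (p ^ 2 * (-(p ^ 2 * w ^ 2))⁻¹) hq] at h1
    have f1 : p ^ 2 * (-(p ^ 2 * w ^ 2))⁻¹ = -(w ^ 2)⁻¹ := by field_simp
    have f2 : (-w ^ 2)⁻¹ = -(w ^ 2)⁻¹ := by field_simp
    have f3 : p ^ 2 * -w ^ 2 = -(p ^ 2 * w ^ 2) := by ring
    rw [f1] at h1
    rw [f2, f3] at h2
    rw [h1, h2]
    field_simp
    ring
  have hI2 : I ^ 2 = -1 := I_sq
  have I0 := I_ne_zero
  have pw0 := mul_ne_zero hp0 hw0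
  have k1 : (1 + w) * (1 - w ^ 2) = w * (1 - w) := by linear_combination (1 - w) * hw
  have k2 : w ^ 3 * (1 + w ^ 2) * (1 - w) = -(w * (1 - w)) := by
    linear_combination (1 + w ^ 2) * (1 - w) * hw3 + (1 - w) * hw
  have k3 : (1 - w) * (1 - w ^ 2) = 3 := by linear_combination hw3 - hw
  have k4 : (1 + w ^ 2) * (1 + w) = 1 := by linear_combination hw3 + hw
  refine ⟨?_, ?_, ?_, ?_⟩
  · have W := weier2 hp0 hp I (I * w) (I * w ^ 2) (I * (p * w)) I0
      (by positivity) (by positivity) (by positivity)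
      (-w) (w ^ 2) (-p) (w / p) (-(p * w)) (1 / (p * w)) (-1) w (-(p * w ^ 2)) (1 / p) (-w ^ 2) w
      (by linear_combination w * hI2) (by linear_combination -I * hw3)
      (by linear_combination p * w ^ 3 * hI2 - p * hw3) (by field_simp)
      (by linear_combination p * w * hI2) (by field_simp)
      (by linear_combination w ^ 3 * hI2 - hw3) (by ring)
      (by linear_combination p * w ^ 2 * hI2) (by field_simp)
      (by linear_combination w ^ 2 * hI2) (by linear_combination -I * hw3)
    rw [hV, hU', hB, i4, hDm, i3, hA, hU, hDm', i1, hV'] at W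
    field_simp at W
    refine mul_left_cancel₀ (mul_ne_zero hw0 hw1) ?_
    linear_combination W + V * B * D * k1 - C * V * Dm * k2
  · have W := weier2 hp0 hp 1 w (-w) (-(p * w)) one_ne_zero hw0
      (neg_ne_zero.mpr hw0) (neg_ne_zero.mpr pw0)
      w (w ^ 2) (p * w ^ 2) (1 / p) (-(p * w)) (-1 / (p * w)) (-w ^ 2) (-1)
      (-(p * w ^ 2)) (-1 / p) (-w) (-w ^ 2)
      (by ring) (by linear_combination -hw3) (by ring) (by field_simp) (by ring) (by field_simp)
      (by ring) (by ring) (by ring) (by field_simp) (by ring) (by linear_combination -hw3)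
    rw [hU, hU', hD', i1, hDm, i5, hV', hA, hDm', i2, hV] at W
    field_simp at W
    refine mul_left_cancel₀ hw0 ?_
    linear_combination -W - w * U ^ 2 * D * C * k3 - Dm ^ 2 * V * A * hw + w * Dm * B * V ^ 2 * k4
  · have W := weier2 hp0 hp 1 (p * w) (-1) w one_ne_zero pw0
      (neg_ne_zero.mpr one_ne_zero) hw0
      (p * w) (1 / (p * w)) (-w) (-w ^ 2) w (w ^ 2) (-(p * w)) (-1 / (p * w))
      (p * w ^ 2) p (-1) (-1)
      (by ring) (by field_simp) (by ring) (by linear_combination hw3)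
      (by ring) (by linear_combination -hw3) (by ring) (by field_simp)
      (by ring) (by ring) (by ring) (by ring)
    rw [hD, i3, hV, hV', hU, hU', hDm, i5, hD', hC, hA] at W
    field_simp at W
    linear_combination -W - D ^ 2 * V ^ 2 * k4 - U ^ 2 * Dm ^ 2 * k3
  · have W := weier2 hp0 hp 1 (p * w) (-(p * w)) w one_ne_zero pw0
      (neg_ne_zero.mpr pw0) hw0
      (p * w) (1 / (p * w)) (-(p * w ^ 2)) (-p) w (w ^ 2) (-(p ^ 2 * w ^ 2)) (-1)
      (p * w ^ 2) p (-(p * w)) (-1 / (p * w))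
      (by ring) (by field_simp) (by ring) (by ring)
      (by ring) (by linear_combination -hw3) (by ring) (by ring)
      (by ring) (by ring) (by ring) (by field_simp)
    rw [hD, i3, hDm', hB, hU, hU', i6, hA, hD', hC, hDm, i5] at W
    field_simp at W
    refine mul_left_cancel₀ hw0 ?_
    linear_combination -W - p * U ^ 2 * V * A * (3 * hw + (1 + w ^ 2) * k3)
end

lemma theta_consts {p w : ℂ} (hp0 : p ≠ 0) (hp : ‖p‖ < 1) (hw : w ^ 2 + w + 1 = 0) :
    jtheta (-1) (p ^ 2) = 2 * (EE (p ^ 4) / EE (p ^ 2)) ^ 2 ∧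
    jtheta (-p) (p ^ 2) = (EE (p ^ 2) ^ 2 / (EE p * EE (p ^ 4))) ^ 2 ∧
    jtheta p (p ^ 2) = (EE p / EE (p ^ 2)) ^ 2 ∧
    jtheta (p * w) (p ^ 2) = (EE (p ^ 3) / EE (p ^ 6)) / (EE p / EE (p ^ 2)) ∧
    jtheta (-(p * w)) (p ^ 2) = (EE (p ^ 6) ^ 2 / (EE (p ^ 3) * EE (p ^ 12))) /
      (EE (p ^ 2) ^ 2 / (EE p * EE (p ^ 4))) ∧
    jtheta w (p ^ 2) = (1 - w) * (EE (p ^ 6) / EE (p ^ 2)) ∧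
    jtheta (-w) (p ^ 2) = (1 + w) * ((EE (p ^ 12) / EE (p ^ 6)) / (EE (p ^ 4) / EE (p ^ 2))) := by
  have hq := norm_pow_lt' hp two_ne_zero
  have h3 : ‖p ^ 3‖ < 1 := norm_pow_lt' hp (by norm_num)
  have h4 : ‖p ^ 4‖ < 1 := norm_pow_lt' hp (by norm_num)
  have h6 : ‖p ^ 6‖ < 1 := norm_pow_lt' hp (by norm_num)
  have h12 : ‖p ^ 12‖ < 1 := norm_pow_lt' hp (by norm_num)
  have n1 := EE_ne hp
  have n2 := EE_ne hq
  have n3 := EE_ne h3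
  have n4 := EE_ne h4
  have n6 := EE_ne h6
  have n12 := EE_ne h12
  have hw3 : w ^ 3 = 1 := by linear_combination (w - 1) * hw
  have hw0 : w ≠ 0 := by rintro rfl; norm_num at hw3
  have hwi : w⁻¹ = w ^ 2 := by field_simp; linear_combination -hw3
  have o1 := qp_odd_pos hp
  have o2 := qp_odd_neg hp
  have o3 := qp_even_neg hq
  have o4 := qp_odd_pos h3
  have o5 := qp_odd_neg h3
  have o6 := qp_even_neg h6
  simp only [← pow_mul] at o3 o4 o5 o6
  norm_num at o3 o4 o5 o6
  have c1 := qpoc_cube p hq hw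
  have c2 := qpoc_cube (-p) hq hw
  have c3 := qpoc_cube (p ^ 2) hq hw
  have c4 := qpoc_cube (-p ^ 2) hq hw
  have g3 : (-p) ^ 3 = -p ^ 3 := by ring
  have g4 : (-p ^ 2) ^ 3 = -p ^ 6 := by ring
  rw [g3] at c2
  rw [g4] at c4
  simp only [← pow_mul] at c1 c2 c3 c4
  norm_num at c1 c2 c3 c4
  rw [o1, o4] at c1
  rw [o2, o5] at c2
  rw [o3, o6] at c4
  rw [show qpoc (p ^ 2) (p ^ 2) = EE (p ^ 2) from rfl,
    show qpoc (p ^ 6) (p ^ 6) = EE (p ^ 6) from rfl] at c3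
  refine ⟨?_, ?_, ?_, ?_, ?_, ?_, ?_⟩
  · rw [jtheta_eq _ hq, qpoc_succ _ hq, show p ^ 2 * (-1 : ℂ) = -p ^ 2 by ring,
      show p ^ 2 * (-1 : ℂ)⁻¹ = -p ^ 2 by norm_num, o3]
    ring
  · rw [jtheta_eq _ hq, show p ^ 2 * (-p)⁻¹ = -p by field_simp, o2]
    ring
  · rw [jtheta_eq _ hq, show p ^ 2 * p⁻¹ = p by field_simp, o1]
    ring
  · rw [jtheta_eq _ hq, show p ^ 2 * (p * w)⁻¹ = p * w ^ 2 by rw [mul_inv, hwi]; field_simp, ← c1]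
    field_simp
  · rw [jtheta_eq _ hq, show p ^ 2 * (-(p * w))⁻¹ = -p * w ^ 2 by
      rw [inv_neg, mul_inv, hwi]; field_simp, ← c2, show -(p * w) = -p * w by ring]
    field_simp
  · rw [jtheta_eq _ hq, qpoc_succ _ hq, hwi, ← c3]
    field_simp
  · rw [jtheta_eq _ hq, qpoc_succ _ hq, inv_neg, hwi, ← c4, show p ^ 2 * -w = -p ^ 2 * w by ring,
      show p ^ 2 * -w ^ 2 = -p ^ 2 * w ^ 2 by ring]
    field_simp
    ring

lemma eta_eq_s13 {τ e : ℂ} (s : ℂ) (k : ℕ) (hs : s = k * τ / 2)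
    (he : e = Complex.exp ((Real.pi : ℂ) * Complex.I * τ / 24)) :
    dedekindEta s = e ^ k * EE ((e ^ 24) ^ k) := by
  unfold dedekindEta EE qpoc
  have h1 : Complex.exp ((Real.pi : ℂ) * Complex.I * s / 12) = e ^ k := by
    rw [he, ← Complex.exp_nat_mul, hs]; congr 1; ring
  rw [h1]
  congr 2
  ext j
  rw [he, ← pow_succ, ← pow_mul, ← pow_mul, ← Complex.exp_nat_mul, hs]
  congr 2
  push_cast
  ring

/-- the Hauptmodul ζ in terms of the eta quotients. -/
theorem hauptmodul_eta_quotient_identities (τ : ℂ) (hτ : 0 < τ.im) :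
    hauptmodul τ = -2 * phi1 τ * phi2 τ ^ 2 * phi5 τ ^ 3 / (phi3 τ * phi4 τ ^ 2) ∧
    hauptmodul τ + 1 = -(phi1 τ ^ 2 * phi2 τ * phi5 τ ^ 3) / (phi3 τ ^ 2 * phi4 τ) ∧
    hauptmodul τ - 1 = -3 * phi1 τ ^ 2 * phi2 τ * phi3 τ ^ 2 * phi5 τ / phi4 τ ∧
    hauptmodul τ + 2 = 6 * phi1 τ * phi2 τ ^ 2 * phi4 τ ^ 2 * phi5 τ / phi3 τ ∧
    2 * hauptmodul τ + 1 = -3 * phi5 τ ^ 10 / (phi3 τ ^ 4 * phi4 τ ^ 4) := by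
  set e := Complex.exp ((Real.pi : ℂ) * Complex.I * τ / 24) with he
  have he0 : e ≠ 0 := Complex.exp_ne_zero _
  have hpe : Complex.exp ((Real.pi : ℂ) * Complex.I * τ) = e ^ 24 := by
    rw [he, ← Complex.exp_nat_mul]; congr 1; push_cast; ring
  have hp0 : e ^ 24 ≠ 0 := pow_ne_zero _ he0
  have hp : ‖e ^ 24‖ < 1 := by
    rw [← hpe, Complex.norm_exp]
    have : ((Real.pi : ℂ) * Complex.I * τ).re = -(Real.pi * τ.im) := by simp
    rw [this, Real.exp_lt_one_iff]
    have := mul_pos Real.pi_pos hτ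
    linarith
  set w := Complex.exp (2 * (Real.pi : ℂ) * Complex.I / 3) with hwd
  have hprim : IsPrimitiveRoot w 3 := Complex.isPrimitiveRoot_exp 3 (by norm_num)
  have hw3 : w ^ 3 = 1 := hprim.pow_eq_one
  have hw : w ^ 2 + w + 1 = 0 := by
    have h1 : w - 1 ≠ 0 := sub_ne_zero.mpr (hprim.ne_one (by norm_num))
    refine mul_left_cancel₀ h1 ?_
    linear_combination hw3
  have hw' : (w ^ 2) ^ 2 + w ^ 2 + 1 = 0 := by linear_combination hw + w * hw3
  have E1 := eta_eq_s13 (τ / 2) 1 (by push_cast; ring) he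
  have E2 := eta_eq_s13 τ 2 (by push_cast; ring) he
  have E3 := eta_eq_s13 (3 * τ / 2) 3 (by push_cast; ring) he
  have E4 := eta_eq_s13 (2 * τ) 4 (by push_cast; ring) he
  have E6 := eta_eq_s13 (3 * τ) 6 (by push_cast; ring) he
  have E12 := eta_eq_s13 (6 * τ) 12 (by push_cast; ring) he
  have H : hauptmodul τ = w ^ 2 * jtheta (-1) ((e ^ 24) ^ 2) * jtheta (-(e ^ 24 * w)) ((e ^ 24) ^ 2)
    / (jtheta (-e ^ 24) ((e ^ 24) ^ 2) * jtheta (-w) ((e ^ 24) ^ 2)) := by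
    unfold hauptmodul
    rw [hpe]
  simp only [phi1, phi2, phi3, phi4, phi5, E1, E2, E3, E4, E6, E12, H]
  obtain ⟨p, hpp⟩ : ∃ p, p = e ^ 24 := ⟨_, rfl⟩
  rw [← hpp] at hp0 hp ⊢
  obtain ⟨tA, tB, tC, tD, tDm, tU, tV⟩ := theta_consts hp0 hp hw
  obtain ⟨-, -, -, tD', tDm', tU', tV'⟩ := theta_consts hp0 hp hw'
  have n1 := EE_ne hp
  have n2 : EE (p ^ 2) ≠ 0 := EE_ne (norm_pow_lt' hp (by norm_num))
  have n3 : EE (p ^ 3) ≠ 0 := EE_ne (norm_pow_lt' hp (by norm_num))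
  have n4 : EE (p ^ 4) ≠ 0 := EE_ne (norm_pow_lt' hp (by norm_num))
  have n6 : EE (p ^ 6) ≠ 0 := EE_ne (norm_pow_lt' hp (by norm_num))
  have n12 : EE (p ^ 12) ≠ 0 := EE_ne (norm_pow_lt' hp (by norm_num))
  obtain ⟨R1, R2, R3, R4⟩ := theta_relations hp0 hp hw tA tB tC tD tD' tDm tDm' tU tU' tV tV'
    (div_ne_zero n6 n2)
  have hw1 : 1 + w = -w ^ 2 := by linear_combination hw
  have hw0 : w ≠ 0 := hprim.ne_zero (by norm_num)
  rw [tA, tDm, tB, tV, hw1]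
  simp only [pow_one]
  generalize EE p = e1 at *
  generalize EE (p ^ 2) = e2 at *
  generalize EE (p ^ 3) = e3 at *
  generalize EE (p ^ 4) = e4 at *
  generalize EE (p ^ 6) = e6 at *
  generalize EE (p ^ 12) = e12 at *
  clear tA tB tC tD tDm tU tV tD' tDm' tU' tV' H E1 E2 E3 E4 E6 E12
  subst hpp
  field_simp at R1 R2 R3 R4
  refine ⟨?_, ?_, ?_, ?_, ?_⟩
  · field_simp
  · field_simp
    linear_combination -R1
  · field_simp
    linear_combination R2
  · field_simp
    refine mul_left_cancel₀ n3 ?_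
    linear_combination -R1 + e12 * R4
  · field_simp
    linear_combination R3
end
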